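/- Let n ∈ ℕ, n ≥ 2, and c ∈ ℝ. The operator (Δ² + c|x|⁻⁴) with domain C₀^∞(ℝⁿ∖{0}) is essentially self-adjoint in L²(ℝⁿ; dⁿx) if and only if for every ℓ ∈ ℕ₀ the operator τ_{2,n,ℓ}(c) with domain C₀^∞((0,∞)) is essentially self-adjoint in L²((0,∞); dr). -/

import Mathlib

open MeasureTheory

noncomputable section

/-- A densely defined operator `T` in a complex Hilbert space is *essentially self-adjoint*
if its adjoint `T*` is self-adjoint (equivalently, its closure is self-adjoint). -/
def EssentiallySelfAdjoint {H : Type*} [NormedAddCommGroup H] [InnerProductSpace ℂ H]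
    [CompleteSpace H] (T : H →ₗ.[ℂ] H) : Prop :=
  Dense (T.domain : Set H) ∧ IsSelfAdjoint T.adjoint

/-- The Laplacian of `f : ℝⁿ → ℂ`. -/
def laplacian {n : ℕ} (f : EuclideanSpace ℝ (Fin n) → ℂ) (x : EuclideanSpace ℝ (Fin n)) : ℂ :=
  ∑ i : Fin n, fderiv ℝ (fun y => fderiv ℝ f y (EuclideanSpace.single i (1:ℝ))) x
    (EuclideanSpace.single i (1:ℝ))

/-- The graph of the operator given by the formal differential expression `L` with domain
`C₀^∞(ℝⁿ \ {0})`, as a subspace of `L²(ℝⁿ) × L²(ℝⁿ)`. -/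
def graphOf (n : ℕ) (L : (EuclideanSpace ℝ (Fin n) → ℂ) → (EuclideanSpace ℝ (Fin n) → ℂ)) :
    Submodule ℂ (Lp ℂ 2 (volume : Measure (EuclideanSpace ℝ (Fin n))) ×
      Lp ℂ 2 (volume : Measure (EuclideanSpace ℝ (Fin n)))) :=
  Submodule.span ℂ {p | ∃ φ : EuclideanSpace ℝ (Fin n) → ℂ,
    ContDiff ℝ (⊤ : ℕ∞) φ ∧ HasCompactSupport φ ∧ (0 : EuclideanSpace ℝ (Fin n)) ∉ tsupport φ ∧
    (p.1 : EuclideanSpace ℝ (Fin n) → ℂ) =ᵐ[volume] φ ∧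
    (p.2 : EuclideanSpace ℝ (Fin n) → ℂ) =ᵐ[volume] L φ}

/-- The operator in `L²(ℝⁿ)` given by the formal differential expression `L` with domain
`C₀^∞(ℝⁿ \ {0})`. -/
def opOn (n : ℕ) (L : (EuclideanSpace ℝ (Fin n) → ℂ) → (EuclideanSpace ℝ (Fin n) → ℂ)) :
    Lp ℂ 2 (volume : Measure (EuclideanSpace ℝ (Fin n))) →ₗ.[ℂ]
      Lp ℂ 2 (volume : Measure (EuclideanSpace ℝ (Fin n))) :=
  (graphOf n L).toLinearPMap

/-- The operator `Δ² + c|x|⁻⁴` with domain `C₀^∞(ℝⁿ \ {0})` in `L²(ℝⁿ)`. -/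
def T2op (n : ℕ) (c : ℝ) :
    Lp ℂ 2 (volume : Measure (EuclideanSpace ℝ (Fin n))) →ₗ.[ℂ]
      Lp ℂ 2 (volume : Measure (EuclideanSpace ℝ (Fin n))) :=
  opOn n (fun φ x => laplacian (laplacian φ) x + ((c * (‖x‖ ^ 4)⁻¹ : ℝ) : ℂ) * φ x)
/-- Lebesgue measure on `(0,∞)`. -/
def lebIoi : Measure ℝ := volume.restrict (Set.Ioi 0)

/-- The graph of the operator given by a formal differential expression `L` with domain
`C₀^∞((0,∞))`, as a subspace of `L²((0,∞); dr) × L²((0,∞); dr)`. -/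
def graphOnHalfLine (L : (ℝ → ℂ) → (ℝ → ℂ)) : Submodule ℂ (Lp ℂ 2 lebIoi × Lp ℂ 2 lebIoi) :=
  Submodule.span ℂ {p | ∃ φ : ℝ → ℂ, ContDiff ℝ (⊤ : ℕ∞) φ ∧ HasCompactSupport φ ∧
    tsupport φ ⊆ Set.Ioi 0 ∧
    (p.1 : ℝ → ℂ) =ᵐ[lebIoi] φ ∧ (p.2 : ℝ → ℂ) =ᵐ[lebIoi] L φ}

/-- The operator in `L²((0,∞); dr)` given by a formal differential expression `L`
with domain `C₀^∞((0,∞))`. -/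
def opOnHalfLine (L : (ℝ → ℂ) → (ℝ → ℂ)) : Lp ℂ 2 lebIoi →ₗ.[ℂ] Lp ℂ 2 lebIoi :=
  (graphOnHalfLine L).toLinearPMap


/-- The differential expression `d²/dr² - (n+2ℓ-1)(n+2ℓ-3)/(4r²)`. -/
def bExp (n ℓ : ℕ) (φ : ℝ → ℂ) : ℝ → ℂ := fun r =>
  deriv (deriv φ) r
    - (((((n : ℝ) + 2 * ℓ - 1) * ((n : ℝ) + 2 * ℓ - 3)) / (4 * r ^ 2) : ℝ) : ℂ) * φ r

/-- The differential expression `τ_{2,n,ℓ}(c) = [d²/dr² - (n+2ℓ-1)(n+2ℓ-3)/(4r²)]² + c/r⁴`. -/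
def tau2nlExp (n ℓ : ℕ) (c : ℝ) (φ : ℝ → ℂ) : ℝ → ℂ := fun r =>
  bExp n ℓ (bExp n ℓ φ) r + ((c / r ^ 4 : ℝ) : ℂ) * φ r

/-- The operator `τ_{2,n,ℓ}(c)|_{C₀^∞((0,∞))}` in `L²((0,∞); dr)`. -/
def tau2nlOp (n ℓ : ℕ) (c : ℝ) : Lp ℂ 2 lebIoi →ₗ.[ℂ] Lp ℂ 2 lebIoi :=
  opOnHalfLine (tau2nlExp n ℓ c)

open scoped ContDiff ComplexConjugate

section Abstract

variable {H : Type*} [NormedAddCommGroup H] [InnerProductSpace ℂ H] [CompleteSpace H]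

open scoped InnerProductSpace

omit [CompleteSpace H] in
lemma toLinearPMap_spec {G : Submodule ℂ (H × H)}
    (hG : ∀ p ∈ G, p.1 = 0 → p.2 = 0) :
    (∀ p ∈ G, ∃ x : G.toLinearPMap.domain, (x : H) = p.1 ∧ G.toLinearPMap x = p.2) ∧
    ∀ x : G.toLinearPMap.domain, ((x : H), G.toLinearPMap x) ∈ G := by
  have h2 : ∀ x : G.toLinearPMap.domain, ((x : H), G.toLinearPMap x) ∈ G := fun x =>
    Submodule.mem_graph_toLinearPMap hG x
  refine ⟨fun p hp => ?_, h2⟩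
  let x : G.toLinearPMap.domain := ⟨p.1, Submodule.mem_map_of_mem (f := LinearMap.fst ℂ H H) hp⟩
  refine ⟨x, rfl, ?_⟩
  have h := hG _ (G.sub_mem (h2 x) hp) (by simp [x])
  exact sub_eq_zero.1 h

/-- Von Neumann's criterion for essential self-adjointness of a symmetric operator. -/
lemma essentiallySelfAdjoint_toLinearPMap_iff {G : Submodule ℂ (H × H)}
    (hd : Dense (G.map (LinearMap.fst ℂ H H) : Set H))
    (hs : ∀ p ∈ G, ∀ q ∈ G, ⟪p.2, q.1⟫_ℂ = ⟪p.1, q.2⟫_ℂ) :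
    EssentiallySelfAdjoint G.toLinearPMap ↔
      ∀ z : ℂ, z * z = -1 → ∀ y : H, (∀ p ∈ G, ⟪y, p.2⟫_ℂ = z * ⟪y, p.1⟫_ℂ) → y = 0 := by
  have hG : ∀ p ∈ G, p.1 = 0 → p.2 = 0 := by
    intro p hp h0
    refine hd.eq_zero_of_inner_left (𝕜 := ℂ) ?_
    intro v hv
    obtain ⟨q, hq, rfl⟩ := hv
    simpa [h0] using hs p hp q hq
  obtain ⟨hT1, hT2⟩ := toLinearPMap_spec hG
  set T := G.toLinearPMap with hTdef
  have hd' : Dense (T.domain : Set H) := hd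
  have hconj : ∀ z : ℂ, z * z = -1 → conj z = -z := by
    intro z hz
    have h1 : (z - Complex.I) * (z + Complex.I) = 0 := by
      linear_combination hz - Complex.I_mul_I
    rcases mul_eq_zero.1 h1 with h | h
    · rw [sub_eq_zero.1 h]; simp
    · rw [eq_neg_of_add_eq_zero_left h]; simp
  have hadj : T.adjoint.IsFormalAdjoint T := T.adjoint_isFormalAdjoint hd'
  constructor
  · rintro ⟨-, hsa⟩ z hz y hy
    have hy1 : ∀ x : T.domain, ⟪conj z • y, (x : H)⟫_ℂ = ⟪y, T x⟫_ℂ := by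
      intro x
      rw [inner_smul_left, Complex.conj_conj]
      exact (hy _ (hT2 x)).symm
    have hymem := T.mem_adjoint_domain_of_exists y ⟨_, hy1⟩
    have hval : T.adjoint ⟨y, hymem⟩ = conj z • y := LinearPMap.adjoint_apply_eq hd' _ hy1
    have hf : T.adjoint.IsFormalAdjoint T.adjoint := by
      have := T.adjoint.adjoint_isFormalAdjoint hsa.dense_domain
      rwa [LinearPMap.isSelfAdjoint_def.1 hsa] at this
    have h := hf ⟨y, hymem⟩ ⟨y, hymem⟩
    rw [hval] at h
    simp only [inner_smul_left, inner_smul_right, hconj z hz, map_neg] at h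
    have h2 : z * ⟪y, y⟫_ℂ = 0 := by linear_combination h / 2
    rcases mul_eq_zero.1 h2 with h3 | h3
    · rw [h3] at hz; simp at hz
    · exact inner_self_eq_zero.1 h3
  · intro hdef
    refine ⟨hd', ?_⟩
    have hTT : T ≤ T.adjoint := LinearPMap.IsFormalAdjoint.le_adjoint hd' (S := T) (T := T)
      (fun x y => hs _ (hT2 x) _ (hT2 y))
    have hd2 : Dense (T.adjoint.domain : Set H) := hd'.mono hTT.1
    have hval : ∀ p ∈ G, ∀ y : T.adjoint.domain, ⟪T.adjoint y, p.1⟫_ℂ = ⟪(y : H), p.2⟫_ℂ := by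
      intro p hp y
      obtain ⟨x, hx1, hx2⟩ := hT1 p hp
      rw [← hx1, ← hx2]; exact hadj y x
    -- the graph of the adjoint lies in the closure of `G`
    have hclos : ∀ y : T.adjoint.domain, ((y : H), T.adjoint y) ∈ closure (G : Set (H × H)) := by
      intro y
      let z := Complex.I
      have hz : z * z = -1 := Complex.I_mul_I
      let A : H × H →ₗ[ℂ] H := LinearMap.snd ℂ H H - z • LinearMap.fst ℂ H H
      have hA : ∀ p, A p = p.2 - z • p.1 := fun p => rfl
      have hnorm : ∀ p ∈ G, ‖A p‖ ^ 2 = ‖p.2‖ ^ 2 + ‖p.1‖ ^ 2 := by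
        intro p hp
        have h1 := hs p hp p hp
        have h2 : ((‖A p‖ ^ 2 : ℝ) : ℂ) = ((‖p.2‖ ^ 2 + ‖p.1‖ ^ 2 : ℝ) : ℂ) := by
          push_cast
          have e : ∀ v : H, ((‖v‖ : ℂ)) ^ 2 = ⟪v, v⟫_ℂ := fun v =>
            (inner_self_eq_norm_sq_to_K (𝕜 := ℂ) v).symm
          rw [e, e, e, hA]
          simp only [inner_sub_left, inner_sub_right, inner_smul_left, inner_smul_right,
            hconj z hz]
          linear_combination (-z) * h1 - ⟪p.1, p.1⟫_ℂ * hz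
        exact_mod_cast h2
      have hdense : Dense ((G.map A : Submodule ℂ H) : Set H) := by
        rw [Submodule.dense_iff_topologicalClosure_eq_top,
          Submodule.topologicalClosure_eq_top_iff, Submodule.eq_bot_iff]
        intro v hv
        refine hdef z hz v fun p hp => ?_
        have h := (Submodule.mem_orthogonal' _ _).1 hv (A p) (Submodule.mem_map_of_mem hp)
        rw [hA, inner_sub_right, inner_smul_right, sub_eq_zero] at h
        exact h
      obtain ⟨u, hu, hulim⟩ := mem_closure_iff_seq_limit.1
        (hdense (T.adjoint y - z • (y : H)))
      choose p hp hpu using hu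
      have hle : ∀ m k, dist (p m) (p k) ≤ dist (u m) (u k) := by
        intro m k
        rw [dist_eq_norm, dist_eq_norm, ← hpu m, ← hpu k, ← map_sub]
        have h := hnorm _ (G.sub_mem (hp m) (hp k))
        rw [Prod.norm_def]
        refine max_le ?_ ?_ <;> refine abs_le_of_sq_le_sq' ?_ (norm_nonneg _) |>.2
        · nlinarith [sq_nonneg ‖(p m - p k).2‖]
        · nlinarith [sq_nonneg ‖(p m - p k).1‖]
      have hcau : CauchySeq p := by
        have := hulim.cauchySeq
        rw [Metric.cauchySeq_iff] at this ⊢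
        intro ε hε
        obtain ⟨N, hN⟩ := this ε hε
        exact ⟨N, fun m hm k hk => (hle m k).trans_lt (hN m hm k hk)⟩
      obtain ⟨q, hq⟩ := cauchySeq_tendsto_of_complete hcau
      have hqA : A q = T.adjoint y - z • (y : H) := by
        refine tendsto_nhds_unique ?_ hulim
        have hc : Continuous fun p : H × H => A p := by simp only [hA]; fun_prop
        refine ((hc.tendsto q).comp hq).congr fun k => hpu k
      have hqs : ∀ r ∈ G, ⟪q.2, r.1⟫_ℂ = ⟪q.1, r.2⟫_ℂ := by
        intro r hr
        refine tendsto_nhds_unique (f := fun k => ⟪(p k).2, r.1⟫_ℂ) (l := Filter.atTop)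
          ((hq.snd_nhds).inner tendsto_const_nhds) ?_
        refine ((hq.fst_nhds).inner tendsto_const_nhds).congr fun k => ?_
        exact (hs _ (hp k) _ hr).symm
      have hzero : (y : H) - q.1 = 0 := by
        refine hdef (-z) (by linear_combination hz) _ fun r hr => ?_
        have h1 := hval r hr y
        have h2 := hqs r hr
        have h3 : ⟪q.2 - z • q.1, r.1⟫_ℂ = ⟪T.adjoint y - z • (y : H), r.1⟫_ℂ := by
          rw [← hA, hqA]
        simp only [inner_sub_left, inner_smul_left, hconj z hz] at h3 ⊢
        linear_combination -h1 + h2 - h3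
      have h1 : (y : H) = q.1 := sub_eq_zero.1 hzero
      have h2 : T.adjoint y = q.2 := by
        rw [hA, h1] at hqA
        exact (sub_left_injective hqA).symm
      have : ((y : H), T.adjoint y) = q := Prod.ext h1 h2
      rw [this]
      exact mem_closure_of_tendsto hq (Filter.Eventually.of_forall hp)
    have hsym : T.adjoint.IsFormalAdjoint T.adjoint := by
      intro x y
      obtain ⟨p, hp, hlim⟩ := mem_closure_iff_seq_limit.1 (hclos y)
      refine tendsto_nhds_unique (f := fun k => ⟪T.adjoint x, (p k).1⟫_ℂ) (l := Filter.atTop)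
        (tendsto_const_nhds.inner hlim.fst_nhds) ?_
      refine (tendsto_const_nhds.inner hlim.snd_nhds).congr fun k => ?_
      exact (hval _ (hp k) x).symm
    rw [LinearPMap.isSelfAdjoint_def]
    refine le_antisymm ?_ (LinearPMap.IsFormalAdjoint.le_adjoint hd2 hsym)
    refine LinearPMap.IsFormalAdjoint.le_adjoint hd' fun x y => ?_
    have h := (T.adjoint.adjoint_isFormalAdjoint hd2).symm ⟨x, hTT.1 x.2⟩ y
    rwa [← hTT.2 (x := x) (y := ⟨x, hTT.1 x.2⟩) rfl] at h

lemma essentiallySelfAdjoint_span_iff {S : Set (H × H)}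
    (hd : ∀ y : H, (∀ p ∈ S, ⟪y, p.1⟫_ℂ = 0) → y = 0)
    (hs : ∀ p ∈ S, ∀ q ∈ S, ⟪p.2, q.1⟫_ℂ = ⟪p.1, q.2⟫_ℂ) :
    EssentiallySelfAdjoint (Submodule.span ℂ S).toLinearPMap ↔
      ∀ z : ℂ, z * z = -1 → ∀ y : H, (∀ p ∈ S, ⟪y, p.2⟫_ℂ = z * ⟪y, p.1⟫_ℂ) → y = 0 := by
  rw [essentiallySelfAdjoint_toLinearPMap_iff]
  · refine forall₂_congr fun z hz => forall_congr' fun y => ?_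
    refine imp_congr_left ⟨fun h p hp => h p (Submodule.subset_span hp), fun h p hp => ?_⟩
    induction hp using Submodule.span_induction with
    | mem p hp => exact h p hp
    | zero => simp
    | add p q _ _ h1 h2 => simp only [Prod.fst_add, Prod.snd_add, inner_add_right, h1, h2, mul_add]
    | smul a p _ h1 => simp only [Prod.smul_fst, Prod.smul_snd, inner_smul_right, h1]; ring
  · rw [Submodule.dense_iff_topologicalClosure_eq_top,
      Submodule.topologicalClosure_eq_top_iff, Submodule.eq_bot_iff]
    intro v hv
    refine hd v fun p hp => ?_
    exact (Submodule.mem_orthogonal' _ _).1 hv p.1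
      (Submodule.mem_map_of_mem (f := LinearMap.fst ℂ H H) (Submodule.subset_span hp))
  · intro p hp q hq
    induction hp, hq using Submodule.span_induction₂ with
    | mem_mem p q hp hq => exact hs p hp q hq
    | zero_left q _ => simp
    | zero_right p _ => simp
    | add_left p q r _ _ _ h1 h2 =>
      simp only [Prod.fst_add, Prod.snd_add, inner_add_left, h1, h2]
    | add_right p q r _ _ _ h1 h2 =>
      simp only [Prod.fst_add, Prod.snd_add, inner_add_right, h1, h2]
    | smul_left a p q _ _ h => simp only [Prod.smul_fst, Prod.smul_snd, inner_smul_left, h]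
    | smul_right a p q _ _ h => simp only [Prod.smul_fst, Prod.smul_snd, inner_smul_right, h]

end Abstract

section TestFunctions

variable {X : Type*} [NormedAddCommGroup X] [NormedSpace ℝ X]

/-- Smooth complex-valued functions with compact support contained in `Ω`. -/
structure IsTest (Ω : Set X) (φ : X → ℂ) : Prop where
  contDiff : ContDiff ℝ ∞ φ
  hasCompactSupport : HasCompactSupport φ
  tsupport_subset : tsupport φ ⊆ Ω

lemma contDiff_of_tsupport {F : Type*} [NormedAddCommGroup F] [NormedSpace ℝ F] {f : X → F}
    (h : ∀ x ∈ tsupport f, ContDiffAt ℝ ∞ f x) : ContDiff ℝ ∞ f := by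
  rw [contDiff_iff_contDiffAt]
  intro x
  by_cases hx : x ∈ tsupport f
  · exact h x hx
  · exact contDiffAt_const.congr_of_eventuallyEq (notMem_tsupport_iff_eventuallyEq.1 hx)

namespace IsTest

variable {Ω : Set X} {φ ψ : X → ℂ}

lemma smul_of_contDiffAt {g : X → ℂ} (hg : ∀ x ∈ Ω, ContDiffAt ℝ ∞ g x) (hφ : IsTest Ω φ) :
    IsTest Ω (fun x => g x * φ x) where
  contDiff := contDiff_of_tsupport fun x hx =>
    (hg x (hφ.tsupport_subset (tsupport_mul_subset_right hx))).mul hφ.contDiff.contDiffAt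
  hasCompactSupport := hφ.hasCompactSupport.mul_left
  tsupport_subset := tsupport_mul_subset_right.trans hφ.tsupport_subset

lemma add (hφ : IsTest Ω φ) (hψ : IsTest Ω ψ) : IsTest Ω (fun x => φ x + ψ x) where
  contDiff := hφ.contDiff.add hψ.contDiff
  hasCompactSupport := hφ.hasCompactSupport.add hψ.hasCompactSupport
  tsupport_subset := (tsupport_add φ ψ).trans
    (Set.union_subset hφ.tsupport_subset hψ.tsupport_subset)

lemma zero : IsTest Ω (fun _ => 0) where
  contDiff := contDiff_const
  hasCompactSupport := HasCompactSupport.zero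
  tsupport_subset := by simp [tsupport]

lemma sum {ι : Type*} (s : Finset ι) {f : ι → X → ℂ} (h : ∀ i ∈ s, IsTest Ω (f i)) :
    IsTest Ω (fun x => ∑ i ∈ s, f i x) := by
  classical
  induction s using Finset.induction_on with
  | empty => simpa using zero
  | insert i s hi ih =>
    simp only [Finset.sum_insert hi]
    exact (h i (by simp)).add (ih fun j hj => h j (by simp [hj]))

lemma star_comp (hφ : IsTest Ω φ) : IsTest Ω (fun x => conj (φ x)) where
  contDiff := Complex.conjCLE.contDiff.comp hφ.contDiff
  hasCompactSupport := hφ.hasCompactSupport.comp_left (map_zero _)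
  tsupport_subset := (tsupport_comp_subset (map_zero conj) φ).trans hφ.tsupport_subset

lemma fderiv_apply (hφ : IsTest Ω φ) (v : X) : IsTest Ω (fun x => fderiv ℝ φ x v) where
  contDiff := (hφ.contDiff.fderiv_right (m := ∞) (by simp)).clm_apply contDiff_const
  hasCompactSupport := hφ.hasCompactSupport.fderiv_apply ℝ v
  tsupport_subset := (tsupport_fderiv_apply_subset ℝ v).trans hφ.tsupport_subset

lemma memLp [MeasurableSpace X] [OpensMeasurableSpace X] (hφ : IsTest Ω φ) (μ : Measure X)
    [IsFiniteMeasureOnCompacts μ] : MemLp φ 2 μ :=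
  hφ.contDiff.continuous.memLp_of_hasCompactSupport hφ.hasCompactSupport

lemma integrable [MeasurableSpace X] [OpensMeasurableSpace X] (hφ : IsTest Ω φ) (μ : Measure X)
    [IsFiniteMeasureOnCompacts μ] : Integrable φ μ :=
  hφ.contDiff.continuous.integrable_of_hasCompactSupport hφ.hasCompactSupport

lemma mul (hφ : IsTest Ω φ) (hψ : IsTest Ω ψ) : IsTest Ω (fun x => φ x * ψ x) :=
  smul_of_contDiffAt (fun _ _ => hφ.contDiff.contDiffAt) hψ

end IsTest

/-- Test functions on an open set separate the elements of `L²`. -/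
lemma Lp_eq_zero_of_forall_isTest [MeasurableSpace X] [BorelSpace X] [FiniteDimensional ℝ X]
    {μ : Measure X} [IsFiniteMeasureOnCompacts μ] {Ω : Set X} (hΩ : IsOpen Ω)
    (hae : ∀ᵐ x ∂μ, x ∈ Ω) (y : Lp ℂ 2 μ)
    (h : ∀ φ, IsTest Ω φ → ∫ x, conj (y x) * φ x ∂μ = 0) : y = 0 := by
  have hloc : LocallyIntegrable (fun x => (y x : ℂ)) μ :=
    (Lp.memLp y).locallyIntegrable (by norm_num)
  have h0 := hΩ.ae_eq_zero_of_integral_contDiff_smul_eq_zero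
    (hloc.locallyIntegrableOn Ω) ?_
  · refine Lp.eq_zero_iff_ae_eq_zero.2 ?_
    filter_upwards [h0, hae] with x h1 h2 using h1 h2
  · intro g hg hgc hgs
    have ht : IsTest Ω (fun x => (g x : ℂ)) :=
      ⟨Complex.ofRealCLM.contDiff.comp hg, hgc.comp_left Complex.ofReal_zero,
        (tsupport_comp_subset Complex.ofReal_zero g).trans hgs⟩
    have h1 := congrArg conj (h _ ht)
    rw [← integral_conj, map_zero] at h1
    rw [← h1]
    refine integral_congr_ae (.of_forall fun x => ?_)
    simp [mul_comm]

end TestFunctions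

section Laplacian

variable {n : ℕ}

local notation "E" => EuclideanSpace ℝ (Fin n)

lemma IsTest.laplacian {Ω : Set E} {φ : E → ℂ} (hφ : IsTest Ω φ) : IsTest Ω (laplacian φ) :=
  IsTest.sum _ fun _ _ => (hφ.fderiv_apply _).fderiv_apply _

lemma integral_fderiv_mul {Ω : Set E} {φ ψ : E → ℂ} (hφ : IsTest Ω φ) (hψ : IsTest Ω ψ) (v : E) :
    ∫ x, fderiv ℝ φ x v * ψ x = - ∫ x, φ x * fderiv ℝ ψ x v := by
  rw [integral_mul_fderiv_eq_neg_fderiv_mul_of_integrable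
    (((hφ.fderiv_apply v).mul hψ).integrable _) ((hφ.mul (hψ.fderiv_apply v)).integrable _)
    ((hφ.mul hψ).integrable _) (fun x _ => hφ.contDiff.differentiable (by simp) x)
    (fun x _ => hψ.contDiff.differentiable (by simp) x), neg_neg]

lemma integral_laplacian_mul {Ω : Set E} {φ ψ : E → ℂ} (hφ : IsTest Ω φ) (hψ : IsTest Ω ψ) :
    ∫ x, laplacian φ x * ψ x = ∫ x, φ x * laplacian ψ x := by
  simp only [_root_.laplacian, Finset.sum_mul, Finset.mul_sum]
  rw [integral_finsetSum _ fun _ _ =>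
      (((hφ.fderiv_apply _).fderiv_apply _).mul hψ).integrable _,
    integral_finsetSum _ fun _ _ =>
      (hφ.mul ((hψ.fderiv_apply _).fderiv_apply _)).integrable _]
  refine Finset.sum_congr rfl fun i _ => ?_
  rw [integral_fderiv_mul (hφ.fderiv_apply _) hψ, integral_fderiv_mul hφ (hψ.fderiv_apply _),
    neg_neg]

lemma fderiv_conj_apply (f : E → ℂ) (x v : E) :
    fderiv ℝ (fun y => conj (f y)) x v = conj (fderiv ℝ f x v) := by
  have h := Complex.conjCLE.comp_fderiv (f := f) (x := x)
  have h2 := congrArg (fun L : E →L[ℝ] ℂ => L v) h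
  simpa [Function.comp_def] using h2

lemma laplacian_conj (f : E → ℂ) (x : E) :
    laplacian (fun y => conj (f y)) x = conj (laplacian f x) := by
  simp only [laplacian, fderiv_conj_apply, map_sum]

lemma ContDiff.fderiv_apply_const {f : E → ℂ} (hf : ContDiff ℝ ∞ f) (v : E) :
    ContDiff ℝ ∞ (fun x => fderiv ℝ f x v) :=
  (hf.fderiv_right (m := ∞) (by simp)).clm_apply contDiff_const

lemma ContDiff.laplacian {f : E → ℂ} (hf : ContDiff ℝ ∞ f) : ContDiff ℝ ∞ (laplacian f) := by
  unfold _root_.laplacian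
  exact ContDiff.sum fun _ _ => (hf.fderiv_apply_const _).fderiv_apply_const _

lemma laplacian_add {f g : E → ℂ} (hf : ContDiff ℝ ∞ f) (hg : ContDiff ℝ ∞ g) (x : E) :
    laplacian (fun y => f y + g y) x = laplacian f x + laplacian g x := by
  simp only [laplacian, ← Finset.sum_add_distrib]
  refine Finset.sum_congr rfl fun i _ => ?_
  have h1 : (fun y => fderiv ℝ (fun y => f y + g y) y (EuclideanSpace.single i (1:ℝ))) =
      fun y => fderiv ℝ f y (EuclideanSpace.single i (1:ℝ)) +
        fderiv ℝ g y (EuclideanSpace.single i (1:ℝ)) := by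
    ext y
    rw [fderiv_fun_add (hf.differentiable (by simp) y) (hg.differentiable (by simp) y)]
    rfl
  rw [h1, fderiv_fun_add ((hf.fderiv_apply_const _).differentiable (by simp) x)
    ((hg.fderiv_apply_const _).differentiable (by simp) x)]
  rfl

lemma laplacian_const_mul {f : E → ℂ} (hf : ContDiff ℝ ∞ f) (a : ℂ) (x : E) :
    laplacian (fun y => a * f y) x = a * laplacian f x := by
  simp only [laplacian, Finset.mul_sum]
  refine Finset.sum_congr rfl fun i _ => ?_
  have h1 : (fun y => fderiv ℝ (fun y => a * f y) y (EuclideanSpace.single i (1:ℝ))) =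
      fun y => a * fderiv ℝ f y (EuclideanSpace.single i (1:ℝ)) := by
    ext y
    rw [fderiv_const_mul (hf.differentiable (by simp) y)]
    rfl
  rw [h1, fderiv_const_mul ((hf.fderiv_apply_const _).differentiable (by simp) x)]
  rfl

/-- The radial part of the Laplacian in the variable `s = |x|²`, with parameter `m`. -/
def radialOp (m : ℝ) (κ : ℝ → ℂ) (s : ℝ) : ℂ :=
  4 * s * deriv (deriv κ) s + m * deriv κ s

lemma ContDiff.deriv_complex {κ : ℝ → ℂ} (hκ : ContDiff ℝ ∞ κ) : ContDiff ℝ ∞ (deriv κ) :=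
  ((contDiff_infty_iff_deriv (𝕜 := ℝ)).1 hκ).2

lemma ContDiff.radialOp {m : ℝ} {κ : ℝ → ℂ} (hκ : ContDiff ℝ ∞ κ) :
    ContDiff ℝ ∞ (radialOp m κ) := by
  have h1 := hκ.deriv_complex
  have h2 := h1.deriv_complex
  have h3 : ContDiff ℝ ∞ (fun s : ℝ => (s : ℂ)) := Complex.ofRealCLM.contDiff
  unfold _root_.radialOp
  fun_prop

lemma hasFDerivAt_comp_normSq {κ : ℝ → ℂ} (hκ : ContDiff ℝ ∞ κ) (x : E) :
    HasFDerivAt (fun y : E => κ (‖y‖ ^ 2))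
      ((2 • innerSL ℝ x : E →L[ℝ] ℝ).smulRight (deriv κ (‖x‖ ^ 2))) x := by
  have h1 : HasFDerivAt (fun y : E => ‖y‖ ^ 2) (2 • innerSL ℝ x : E →L[ℝ] ℝ) x :=
    (hasStrictFDerivAt_norm_sq x).hasFDerivAt
  have h2 : HasDerivAt κ (deriv κ (‖x‖ ^ 2)) (‖x‖ ^ 2) :=
    (hκ.differentiable (by simp) _).hasDerivAt
  exact h2.hasFDerivAt.comp x h1

lemma contDiff_comp_normSq {κ : ℝ → ℂ} (hκ : ContDiff ℝ ∞ κ) :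
    ContDiff ℝ ∞ (fun y : E => κ (‖y‖ ^ 2)) :=
  hκ.comp (contDiff_norm_sq ℝ)

lemma fderiv_radial_mul {κ : ℝ → ℂ} (hκ : ContDiff ℝ ∞ κ) {P : E → ℂ} (hP : ContDiff ℝ ∞ P)
    (x : E) (i : Fin n) :
    fderiv ℝ (fun y => κ (‖y‖ ^ 2) * P y) x (EuclideanSpace.single i (1:ℝ)) =
      κ (‖x‖ ^ 2) * fderiv ℝ P x (EuclideanSpace.single i (1:ℝ)) +
      2 * (deriv κ (‖x‖ ^ 2) * ((x i : ℂ) * P x)) := by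
  rw [((hasFDerivAt_comp_normSq hκ x).fun_mul (hP.differentiable (by simp) x).hasFDerivAt).fderiv]
  simp [EuclideanSpace.inner_single_right]
  ring

lemma hasFDerivAt_coord (x : E) (i : Fin n) :
    HasFDerivAt (fun y : E => ((y i : ℝ) : ℂ))
      (Complex.ofRealCLM.comp (EuclideanSpace.proj (𝕜 := ℝ) i)) x :=
  (Complex.ofRealCLM.comp (EuclideanSpace.proj (𝕜 := ℝ) i)).hasFDerivAt

lemma sum_coord_mul_fderiv (P : E → ℂ) (x : E) :
    ∑ i, (x i : ℂ) * fderiv ℝ P x (EuclideanSpace.single i (1:ℝ)) = fderiv ℝ P x x := by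
  have h : x = ∑ i, (x i) • EuclideanSpace.single i (1:ℝ) := by
    have := (EuclideanSpace.basisFun (Fin n) ℝ).sum_repr x
    simpa using this.symm
  conv_rhs => rw [h, map_sum]
  simp [← h]

lemma laplacian_radial_mul {κ : ℝ → ℂ} (hκ : ContDiff ℝ ∞ κ) {P : E → ℂ} (hP : ContDiff ℝ ∞ P)
    {d : ℝ} (hd : ∀ x, fderiv ℝ P x x = d * P x) (x : E) :
    laplacian (fun y => κ (‖y‖ ^ 2) * P y) x =
      radialOp (2 * n + 4 * d) κ (‖x‖ ^ 2) * P x + κ (‖x‖ ^ 2) * laplacian P x := by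
  have hκ1 := hκ.deriv_complex
  have hterm : ∀ i : Fin n,
      fderiv ℝ (fun y => fderiv ℝ (fun y => κ (‖y‖ ^ 2) * P y) y (EuclideanSpace.single i (1:ℝ))) x
        (EuclideanSpace.single i (1:ℝ)) =
      κ (‖x‖ ^ 2) * fderiv ℝ (fun y => fderiv ℝ P y (EuclideanSpace.single i (1:ℝ))) x
        (EuclideanSpace.single i (1:ℝ)) +
      4 * deriv κ (‖x‖ ^ 2) * ((x i : ℂ) * fderiv ℝ P x (EuclideanSpace.single i (1:ℝ))) +
      4 * deriv (deriv κ) (‖x‖ ^ 2) * P x * ((x i ^ 2 : ℝ) : ℂ) + 2 * deriv κ (‖x‖ ^ 2) * P x := by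
    intro i
    simp only [fderiv_radial_mul hκ hP]
    have hP1 := hP.fderiv_apply_const (EuclideanSpace.single i (1:ℝ))
    have hc : ContDiff ℝ ∞ (fun y : E => ((y i : ℝ) : ℂ) * P y) :=
      ContDiff.mul (Complex.ofRealCLM.comp (EuclideanSpace.proj (𝕜 := ℝ) i)).contDiff hP
    rw [fderiv_fun_add (((contDiff_comp_normSq hκ).mul hP1).differentiable (by simp) x)
      ((contDiff_const.mul ((contDiff_comp_normSq hκ1).mul hc)).differentiable (by simp) x),
      _root_.add_apply, fderiv_radial_mul hκ hP1,
      fderiv_const_mul (((contDiff_comp_normSq hκ1).mul hc).differentiable (by simp) x),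
      _root_.smul_apply, fderiv_radial_mul hκ1 hc,
      ((hasFDerivAt_coord x i).fun_mul (hP.differentiable (by simp) x).hasFDerivAt).fderiv]
    simp
    ring
  simp only [laplacian, hterm, Finset.sum_add_distrib, ← Finset.mul_sum, sum_coord_mul_fderiv, hd]
  have hn : ∑ i, ((x i ^ 2 : ℝ) : ℂ) = ((‖x‖ ^ 2 : ℝ) : ℂ) := by
    rw [EuclideanSpace.real_norm_sq_eq, Complex.ofReal_sum]
  rw [hn]
  simp [radialOp]
  ring

end Laplacian

section Homogeneous

variable {n : ℕ}

local notation "E" => EuclideanSpace ℝ (Fin n)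

/-- Smooth functions on `ℝⁿ` that are homogeneous of degree `m`. -/
structure IsHomog (m : ℕ) (Q : EuclideanSpace ℝ (Fin n) → ℂ) : Prop where
  contDiff : ContDiff ℝ ∞ Q
  map_smul : ∀ (t : ℝ) x, Q (t • x) = (t : ℂ) ^ m * Q x

/-- Solid spherical harmonics of degree `d`. -/
structure IsSolidHarmonic (d : ℕ) (h : EuclideanSpace ℝ (Fin n) → ℂ) : Prop
    extends IsHomog d h where
  laplacian_eq_zero : ∀ x, laplacian h x = 0

lemma IsHomog.fderiv_self {m : ℕ} {Q : E → ℂ} (hQ : IsHomog m Q) (x : E) :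
    fderiv ℝ Q x x = m * Q x := by
  have h1 : HasDerivAt (fun t : ℝ => Q (t • x)) (fderiv ℝ Q ((1 : ℝ) • x) ((1 : ℝ) • x)) 1 :=
    (hQ.contDiff.differentiable (by simp) _).hasFDerivAt.comp_hasDerivAt (1 : ℝ)
      ((hasDerivAt_id (1 : ℝ)).smul_const x)
  have h2 : HasDerivAt (fun t : ℝ => (t : ℂ) ^ m * Q x) (m * Q x) 1 := by
    have := ((Complex.ofRealCLM.hasDerivAt (x := 1)).pow m).mul_const (Q x)
    simpa using this
  have h3 : (fun t : ℝ => Q (t • x)) = fun t : ℝ => (t : ℂ) ^ m * Q x :=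
    funext fun t => hQ.map_smul t x
  rw [h3] at h1
  simpa using h1.unique h2

lemma fderiv_smul_arg {f : E → ℂ} (hf : ContDiff ℝ ∞ f) {a m : ℕ}
    (h : ∀ (t : ℝ) x, (t : ℂ) ^ a * f (t • x) = (t : ℂ) ^ m * f x) (v : E) (t : ℝ) (x : E) :
    (t : ℂ) ^ (a + 1) * fderiv ℝ f (t • x) v = (t : ℂ) ^ m * fderiv ℝ f x v := by
  have hd : Differentiable ℝ f := hf.differentiable (by simp)
  have h1 : HasFDerivAt (fun x => (t : ℂ) ^ a * f (t • x))
      ((t : ℂ) ^ a • (fderiv ℝ f (t • x)).comp (t • ContinuousLinearMap.id ℝ E)) x :=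
    (((hd _).hasFDerivAt).comp x ((hasFDerivAt_id x).const_smul t)).const_mul _
  have h2 : HasFDerivAt (fun x => (t : ℂ) ^ m * f x) ((t : ℂ) ^ m • fderiv ℝ f x) x :=
    (hd x).hasFDerivAt.const_mul _
  have h3 : (fun x => (t : ℂ) ^ a * f (t • x)) = fun x => (t : ℂ) ^ m * f x :=
    funext fun x => h t x
  rw [h3] at h1
  have h4 := congrArg (fun L : E →L[ℝ] ℂ => L v) (h1.unique h2)
  simp at h4
  rw [← h4]
  ring

lemma IsHomog.laplacian_smul {m : ℕ} {Q : E → ℂ} (hQ : IsHomog m Q) (t : ℝ) (x : E) :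
    (t : ℂ) ^ 2 * laplacian Q (t • x) = (t : ℂ) ^ m * laplacian Q x := by
  simp only [laplacian, Finset.mul_sum]
  refine Finset.sum_congr rfl fun i _ => ?_
  refine fderiv_smul_arg (hQ.contDiff.fderiv_apply_const _) (a := 1) (fun t x => ?_) _ t x
  exact fderiv_smul_arg hQ.contDiff (a := 0) (by simpa using hQ.map_smul) _ t x

lemma continuous_laplacian_smul {Q : E → ℂ} (hQ : ContDiff ℝ ∞ Q) (x : E) :
    Continuous fun t : ℝ => laplacian Q (t • x) :=
  hQ.laplacian.continuous.comp (by fun_prop)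

lemma IsHomog.isHomog_laplacian {m : ℕ} {Q : E → ℂ} (hQ : IsHomog (m + 2) Q) :
    IsHomog m (laplacian Q) where
  contDiff := hQ.contDiff.laplacian
  map_smul t x := by
    have h : (fun t : ℝ => _root_.laplacian Q (t • x)) =
        fun t : ℝ => (t : ℂ) ^ m * _root_.laplacian Q x := by
      refine Continuous.ext_on (dense_compl_singleton (0 : ℝ))
        (continuous_laplacian_smul hQ.contDiff x) (by fun_prop) fun t ht => ?_
      have ht' : (t : ℂ) ^ 2 ≠ 0 := by simpa using ht
      refine mul_left_cancel₀ ht' ?_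
      rw [hQ.laplacian_smul]
      ring
    exact congrFun h t

lemma IsHomog.isSolidHarmonic_of_lt_two {m : ℕ} (hm : m < 2) {Q : E → ℂ} (hQ : IsHomog m Q) :
    IsSolidHarmonic m Q := by
  refine ⟨hQ, fun x => ?_⟩
  interval_cases m
  · simpa using (hQ.laplacian_smul 0 x).symm
  · have h : (fun t : ℝ => (t : ℂ) * laplacian Q (t • x)) = fun _ : ℝ => laplacian Q x := by
      refine Continuous.ext_on (dense_compl_singleton (0 : ℝ))
        (Complex.continuous_ofReal.mul (continuous_laplacian_smul hQ.contDiff x))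
        continuous_const fun t ht => ?_
      have ht' : (t : ℂ) ≠ 0 := by simpa using ht
      refine mul_left_cancel₀ ht' ?_
      have := hQ.laplacian_smul t x
      linear_combination this
    simpa using (congrFun h 0).symm

/-- The span of the functions `|x|^(2j) h` of degree `m`, where `h` is a solid harmonic. -/
def harmonicSpan (n m : ℕ) : Submodule ℂ (EuclideanSpace ℝ (Fin n) → ℂ) :=
  Submodule.span ℂ {f | ∃ (j d : ℕ) (h : EuclideanSpace ℝ (Fin n) → ℂ), 2 * j + d = m ∧
    IsSolidHarmonic d h ∧ f = fun x => ((‖x‖ ^ 2 : ℝ) : ℂ) ^ j * h x}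

lemma contDiff_ofReal_pow (j : ℕ) : ContDiff ℝ ∞ fun s : ℝ => (s : ℂ) ^ j :=
  (Complex.ofRealCLM.contDiff).pow j

lemma IsHomog.add {m : ℕ} {P Q : E → ℂ} (hP : IsHomog m P) (hQ : IsHomog m Q) :
    IsHomog m (P + Q) :=
  ⟨hP.contDiff.add hQ.contDiff, fun t x => by
    simp only [Pi.add_apply, hP.map_smul, hQ.map_smul]; ring⟩

lemma IsHomog.smul {m : ℕ} {P : E → ℂ} (hP : IsHomog m P) (a : ℂ) : IsHomog m (a • P) :=
  ⟨hP.contDiff.const_smul a, fun t x => by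
    simp only [Pi.smul_apply, hP.map_smul, smul_eq_mul]; ring⟩

lemma IsHomog.mul {m k : ℕ} {P Q : E → ℂ} (hP : IsHomog m P) (hQ : IsHomog k Q) :
    IsHomog (m + k) (P * Q) :=
  ⟨hP.contDiff.mul hQ.contDiff, fun t x => by
    simp only [Pi.mul_apply, hP.map_smul, hQ.map_smul]; ring⟩

lemma IsHomog.star_comp {m : ℕ} {P : E → ℂ} (hP : IsHomog m P) :
    IsHomog m (fun x => conj (P x)) :=
  ⟨Complex.conjCLE.contDiff.comp hP.contDiff, fun t x => by
    simp [hP.map_smul]⟩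

lemma isHomog_of_mem_harmonicSpan {m : ℕ} {Q : E → ℂ} (hQ : Q ∈ harmonicSpan n m) :
    IsHomog m Q := by
  induction hQ using Submodule.span_induction with
  | mem f hf =>
    obtain ⟨j, d, h, rfl, hh, rfl⟩ := hf
    refine ⟨(contDiff_comp_normSq (contDiff_ofReal_pow j)).mul hh.contDiff, fun t x => ?_⟩
    rw [hh.map_smul, norm_smul, mul_pow, Real.norm_eq_abs, sq_abs]
    push_cast
    ring
  | zero => exact ⟨contDiff_const, by simp⟩
  | add f g _ _ hf hg => exact hf.add hg
  | smul a f _ hf => exact hf.smul a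

lemma radialOp_pow (m : ℝ) (j : ℕ) (s : ℝ) :
    radialOp m (fun s : ℝ => (s : ℂ) ^ (j + 1)) s = ((j + 1) * (4 * j + m)) * (s : ℂ) ^ j := by
  have hd : ∀ k : ℕ, deriv (fun s : ℝ => (s : ℂ) ^ (k + 1)) = fun s : ℝ => (k + 1) * (s : ℂ) ^ k := by
    intro k
    ext s
    have := ((Complex.ofRealCLM.hasDerivAt (x := s)).fun_pow (k + 1)).deriv
    simpa using this
  rw [radialOp, hd]
  cases j with
  | zero => simp
  | succ k =>
    rw [deriv_const_mul _ (by
      exact ((contDiff_ofReal_pow (k + 1)).differentiable (by simp) s)), hd]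
    push_cast
    ring

lemma exists_laplacian_eq (hn : 0 < n) {m : ℕ} {R : E → ℂ} (hR : R ∈ harmonicSpan n m) :
    ∃ R' ∈ harmonicSpan n (m + 2), ∀ x, laplacian R' x = R x := by
  induction hR using Submodule.span_induction with
  | mem f hf =>
    obtain ⟨j, d, h, rfl, hh, rfl⟩ := hf
    let c : ℂ := (j + 1) * (4 * j + ((2 * n + 4 * d : ℝ) : ℂ))
    have hc : c ≠ 0 := by
      have : c = (((j + 1) * (4 * j + (2 * n + 4 * d)) : ℝ) : ℂ) := by simp [c]
      rw [this, Complex.ofReal_ne_zero]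
      positivity
    refine ⟨c⁻¹ • fun x => ((‖x‖ ^ 2 : ℝ) : ℂ) ^ (j + 1) * h x,
      Submodule.smul_mem _ _ (Submodule.subset_span ⟨j + 1, d, h, by ring, hh, rfl⟩), fun x => ?_⟩
    have hk := contDiff_ofReal_pow (j + 1)
    have h1 := laplacian_const_mul ((contDiff_comp_normSq hk).mul hh.contDiff) c⁻¹ x
    have h2 := laplacian_radial_mul hk hh.contDiff (d := d)
      (by simpa using hh.fderiv_self) x
    have h3 := radialOp_pow (2 * n + 4 * d) j (‖x‖ ^ 2)
    change laplacian (fun y => c⁻¹ * (((‖y‖ ^ 2 : ℝ) : ℂ) ^ (j + 1) * h y)) x = _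
    rw [h1, h2, hh.laplacian_eq_zero, h3]
    change c⁻¹ * (c * _ * _ + _) = _
    field_simp
    ring
  | zero =>
    refine ⟨0, Submodule.zero_mem _, fun x => ?_⟩
    have : (0 : E → ℂ) = fun _ => 0 := rfl
    simp [laplacian, this]
  | add f g _ _ hf hg =>
    obtain ⟨f', hf', hf2⟩ := hf
    obtain ⟨g', hg', hg2⟩ := hg
    refine ⟨f' + g', Submodule.add_mem _ hf' hg', fun x => ?_⟩
    rw [Pi.add_apply, ← hf2, ← hg2]
    exact laplacian_add (isHomog_of_mem_harmonicSpan hf').contDiff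
      (isHomog_of_mem_harmonicSpan hg').contDiff x
  | smul a f _ hf =>
    obtain ⟨f', hf', hf2⟩ := hf
    refine ⟨a • f', Submodule.smul_mem _ _ hf', fun x => ?_⟩
    rw [Pi.smul_apply, ← hf2]
    exact laplacian_const_mul (isHomog_of_mem_harmonicSpan hf').contDiff a x

lemma IsSolidHarmonic.mem_harmonicSpan {m : ℕ} {Q : E → ℂ} (hQ : IsSolidHarmonic m Q) :
    Q ∈ harmonicSpan n m :=
  Submodule.subset_span ⟨0, m, Q, by ring, hQ, by simp⟩

/-- Every smooth homogeneous function is a combination of functions `|x|^(2j) h` with `h` a solid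
harmonic. -/
lemma IsHomog.mem_harmonicSpan (hn : 0 < n) {m : ℕ} {Q : E → ℂ} (hQ : IsHomog m Q) :
    Q ∈ harmonicSpan n m := by
  induction m using Nat.strong_induction_on generalizing Q with
  | _ m ih =>
    rcases lt_or_ge m 2 with hm | hm
    · exact (hQ.isSolidHarmonic_of_lt_two hm).mem_harmonicSpan
    · obtain ⟨k, rfl⟩ := Nat.exists_eq_add_of_le' hm
      obtain ⟨R, hR, hR2⟩ := exists_laplacian_eq hn (ih k (by omega) hQ.isHomog_laplacian)
      have hRh := isHomog_of_mem_harmonicSpan hR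
      have hdiff : IsSolidHarmonic (k + 2) (Q + (-1 : ℂ) • R) := by
        refine ⟨hQ.add (hRh.smul _), fun x => ?_⟩
        have h1 := laplacian_add hQ.contDiff (hRh.smul (-1)).contDiff x
        have h2 := laplacian_const_mul hRh.contDiff (-1) x
        change laplacian (fun y => Q y + ((-1 : ℂ) • R) y) x = 0
        rw [h1]
        change _ + laplacian (fun y => (-1 : ℂ) * R y) x = 0
        rw [h2, hR2]
        ring
      have := Submodule.add_mem _ hdiff.mem_harmonicSpan hR
      simpa using this

/-- The linear span of all smooth homogeneous functions. -/
def homogSpan (n : ℕ) : Submodule ℂ (EuclideanSpace ℝ (Fin n) → ℂ) :=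
  Submodule.span ℂ {Q | ∃ m, IsHomog m Q}

lemma homogSpan_mul {P Q : E → ℂ} (hP : P ∈ homogSpan n) (hQ : Q ∈ homogSpan n) :
    P * Q ∈ homogSpan n := by
  induction hP, hQ using Submodule.span_induction₂ with
  | mem_mem f g hf hg =>
    obtain ⟨m, hm⟩ := hf
    obtain ⟨k, hk⟩ := hg
    exact Submodule.subset_span ⟨m + k, hm.mul hk⟩
  | zero_left g _ => simp
  | zero_right f _ => simp
  | add_left f g h _ _ _ h1 h2 => rw [add_mul]; exact Submodule.add_mem _ h1 h2
  | add_right f g h _ _ _ h1 h2 => rw [mul_add]; exact Submodule.add_mem _ h1 h2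
  | smul_left a f g _ _ h => rw [smul_mul_assoc]; exact Submodule.smul_mem _ _ h
  | smul_right a f g _ _ h => rw [mul_smul_comm]; exact Submodule.smul_mem _ _ h

lemma homogSpan_star {P : E → ℂ} (hP : P ∈ homogSpan n) :
    (fun x => conj (P x)) ∈ homogSpan n := by
  induction hP using Submodule.span_induction with
  | mem f hf => exact Submodule.subset_span ⟨_, hf.choose_spec.star_comp⟩
  | zero => simp only [Pi.zero_apply, map_zero]; exact Submodule.zero_mem _
  | add f g _ _ hf hg =>
    simp only [Pi.add_apply, map_add]; exact Submodule.add_mem _ hf hg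
  | smul a f _ hf =>
    simp only [Pi.smul_apply, smul_eq_mul, map_mul]
    exact Submodule.smul_mem _ (conj a) hf

lemma homogSpan_const (a : ℂ) : (fun _ : E => a) ∈ homogSpan n :=
  Submodule.subset_span ⟨0, contDiff_const, by simp⟩

/-- Restrictions to `K` of combinations of homogeneous functions. -/
def homogSubalgebra (K : Set (EuclideanSpace ℝ (Fin n))) : StarSubalgebra ℂ C(K, ℂ) where
  carrier := {f | ∃ Q ∈ homogSpan n, ∀ x : K, f x = Q x}
  mul_mem' := by
    rintro f g ⟨P, hP, hf⟩ ⟨Q, hQ, hg⟩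
    exact ⟨P * Q, homogSpan_mul hP hQ, fun x => by simp [hf, hg]⟩
  add_mem' := by
    rintro f g ⟨P, hP, hf⟩ ⟨Q, hQ, hg⟩
    exact ⟨P + Q, Submodule.add_mem _ hP hQ, fun x => by simp [hf, hg]⟩
  algebraMap_mem' a := ⟨_, homogSpan_const a, fun x => rfl⟩
  star_mem' := by
    rintro f ⟨P, hP, hf⟩
    exact ⟨_, homogSpan_star hP, fun x => by simp [hf]⟩

lemma isHomog_coord (i : Fin n) : IsHomog 1 (fun x : E => ((x i : ℝ) : ℂ)) :=
  ⟨(Complex.ofRealCLM.comp (EuclideanSpace.proj (𝕜 := ℝ) i)).contDiff, by simp⟩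

lemma exists_homogSpan_near {K : Set E} (hK : IsCompact K) {ψ : E → ℂ} (hψ : Continuous ψ)
    {ε : ℝ} (hε : 0 < ε) : ∃ Q ∈ homogSpan n, ∀ x ∈ K, ‖ψ x - Q x‖ < ε := by
  have := isCompact_iff_compactSpace.1 hK
  have htop := ContinuousMap.starSubalgebra_topologicalClosure_eq_top_of_separatesPoints
    (𝕜 := ℂ) (homogSubalgebra K) (by
      intro x y hxy
      obtain ⟨i, hi⟩ : ∃ i, (x : E) i ≠ (y : E) i := by
        by_contra! h
        exact hxy (Subtype.ext (PiLp.ext h))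
      refine ⟨fun z => (((z : E) i : ℝ) : ℂ), ⟨⟨_, (isHomog_coord i).contDiff.continuous.comp
        continuous_subtype_val⟩, ⟨_, Submodule.subset_span ⟨1, isHomog_coord i⟩,
          fun z => rfl⟩, rfl⟩, ?_⟩
      simpa using hi)
  let f : C(K, ℂ) := ⟨fun z => ψ z, hψ.comp continuous_subtype_val⟩
  have hf : f ∈ closure (homogSubalgebra K : Set C(K, ℂ)) := by
    have : f ∈ (homogSubalgebra K).topologicalClosure := by rw [htop]; trivial
    exact this
  obtain ⟨g, ⟨Q, hQ, hg⟩, hfg⟩ := Metric.mem_closure_iff.1 hf ε hε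
  refine ⟨Q, hQ, fun x hx => ?_⟩
  have := (ContinuousMap.dist_lt_iff hε).1 hfg ⟨x, hx⟩
  rwa [hg, dist_eq_norm] at this

/-- A radial cutoff that equals `1` on the support of a given test function. -/
lemma exists_radial_cutoff {ψ : E → ℂ} (hψ : IsTest {0}ᶜ ψ) :
    ∃ κ : ℝ → ℂ, IsTest (Set.Ioi 0) κ ∧ ∀ x ∈ tsupport ψ, κ (‖x‖ ^ 2) = 1 := by
  have h0 : (0 : E) ∉ tsupport ψ := fun h => hψ.tsupport_subset h rfl
  obtain ⟨r, hr, hball⟩ := Metric.isOpen_iff.1 (isClosed_tsupport ψ).isOpen_compl 0 h0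
  obtain ⟨R, hR⟩ := hψ.hasCompactSupport.isCompact.isBounded.exists_norm_le
  let b : ContDiffBump ((r ^ 2 + (R ^ 2 + r ^ 2)) / 2 : ℝ) :=
    ⟨R ^ 2 / 2 + r ^ 2 / 4, R ^ 2 / 2 + r ^ 2 / 2, by positivity, by gcongr; norm_num⟩
  refine ⟨fun s => (b s : ℂ), ⟨Complex.ofRealCLM.contDiff.comp b.contDiff,
    b.hasCompactSupport.comp_left Complex.ofReal_zero, ?_⟩, fun x hx => ?_⟩
  · refine (tsupport_comp_subset Complex.ofReal_zero b).trans ?_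
    rw [b.tsupport_eq, Real.closedBall_eq_Icc]
    intro s hs
    have : r ^ 2 / 2 ≤ s := by
      refine le_trans (le_of_eq ?_) hs.1
      simp only [b]; ring
    exact lt_of_lt_of_le (by positivity) this
  · have hxr : r ≤ ‖x‖ := by
      by_contra! h
      exact hball (by simpa using h) hx
    have hxR := hR x hx
    change (b (‖x‖ ^ 2) : ℂ) = 1
    rw [b.one_of_mem_closedBall, Complex.ofReal_one]
    rw [Real.closedBall_eq_Icc]
    have h1 : r ^ 2 ≤ ‖x‖ ^ 2 := by gcongr
    have h2 : ‖x‖ ^ 2 ≤ R ^ 2 := by gcongr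
    have h3 := sq_nonneg r
    constructor <;> simp only [b] <;> linarith

lemma isTest_radial_mul {κ : ℝ → ℂ} (hκ : IsTest (Set.Ioi 0) κ) {P : E → ℂ}
    (hP : ContDiff ℝ ∞ P) : IsTest {0}ᶜ (fun x => κ (‖x‖ ^ 2) * P x) := by
  have hsub : tsupport (fun x : E => κ (‖x‖ ^ 2)) ⊆ (fun x : E => ‖x‖ ^ 2) ⁻¹' tsupport κ :=
    tsupport_comp_subset_preimage κ (by fun_prop)
  refine ⟨(contDiff_comp_normSq hκ.contDiff).mul hP, ?_, ?_⟩
  · refine HasCompactSupport.mul_right ?_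
    obtain ⟨R, hR⟩ := hκ.hasCompactSupport.isCompact.isBounded.exists_norm_le
    refine HasCompactSupport.of_support_subset_isCompact (isCompact_closedBall (0 : E) (R + 1))
      fun x hx => ?_
    have h := hR _ (hsub (subset_tsupport _ hx))
    simp only [norm_pow, norm_norm] at h
    rw [mem_closedBall_zero_iff]
    nlinarith [sq_nonneg (‖x‖ - 1), norm_nonneg x]
  · intro x hx h0
    rw [Set.mem_singleton_iff.1 h0] at hx
    have := hκ.tsupport_subset (hsub (tsupport_mul_subset_left hx))
    simp at this

/-- Completeness of the system of products of radial functions with solid harmonics. -/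
lemma Lp_eq_zero_of_forall_solidHarmonic (hn : 0 < n) (y : Lp ℂ 2 (volume : Measure E))
    (h : ∀ (d : ℕ) (P : E → ℂ), IsSolidHarmonic d P → ∀ κ : ℝ → ℂ, IsTest (Set.Ioi 0) κ →
      ∫ x, conj (y x) * (κ (‖x‖ ^ 2) * P x) = 0) : y = 0 := by
  have : Nontrivial E := by
    have : Nonempty (Fin n) := ⟨⟨0, hn⟩⟩
    infer_instance
  have hint : ∀ ψ, IsTest {0}ᶜ ψ → Integrable fun x => conj (y x) * ψ x := by
    intro ψ hψ
    have := (Lp.memLp y).star.integrable_mul (hψ.memLp volume)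
    exact this
  have hspan : ∀ κ : ℝ → ℂ, IsTest (Set.Ioi 0) κ → ∀ Q ∈ homogSpan n,
      ContDiff ℝ ∞ Q ∧ ∫ x, conj (y x) * (κ (‖x‖ ^ 2) * Q x) = 0 := by
    intro κ hκ Q hQ
    have hlin : ∀ (S : Set (E → ℂ)), (∀ f ∈ S, ContDiff ℝ ∞ f ∧
        ∫ x, conj (y x) * (κ (‖x‖ ^ 2) * f x) = 0) → ∀ f ∈ Submodule.span ℂ S,
        ContDiff ℝ ∞ f ∧ ∫ x, conj (y x) * (κ (‖x‖ ^ 2) * f x) = 0 := by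
      intro S hS f hf
      induction hf using Submodule.span_induction with
      | mem f hf => exact hS f hf
      | zero => exact ⟨contDiff_const, by simp⟩
      | add f g _ _ hf hg =>
        refine ⟨hf.1.add hg.1, ?_⟩
        simp only [Pi.add_apply, mul_add]
        rw [integral_add (hint _ (isTest_radial_mul hκ hf.1))
          (hint _ (isTest_radial_mul hκ hg.1)), hf.2, hg.2, add_zero]
      | smul a f _ hf =>
        refine ⟨hf.1.const_smul a, ?_⟩
        have : ∀ x : E, conj (y x) * (κ (‖x‖ ^ 2) * (a • f) x) =
            a * (conj (y x) * (κ (‖x‖ ^ 2) * f x)) := fun x => by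
          simp only [Pi.smul_apply, smul_eq_mul]; ring
        simp only [this]
        rw [integral_const_mul, hf.2, mul_zero]
    refine hlin _ ?_ Q hQ
    rintro f ⟨m, hf⟩
    refine hlin _ ?_ f (hf.mem_harmonicSpan hn)
    rintro g ⟨j, d, P, -, hP, rfl⟩
    refine ⟨(contDiff_comp_normSq (contDiff_ofReal_pow j)).mul hP.contDiff, ?_⟩
    rw [← h d P hP _ (hκ.smul_of_contDiffAt (g := fun s : ℝ => (s : ℂ) ^ j)
      fun s _ => (contDiff_ofReal_pow j).contDiffAt)]
    refine integral_congr_ae (.of_forall fun x => ?_)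
    simp only
    ring
  refine Lp_eq_zero_of_forall_isTest (Ω := {0}ᶜ) isOpen_compl_singleton ?_ y fun ψ hψ => ?_
  · exact (Set.countable_singleton (0 : E)).ae_notMem volume
  obtain ⟨κ, hκ, hκ1⟩ := exists_radial_cutoff hψ
  have hκt : IsTest {0}ᶜ (fun x : E => κ (‖x‖ ^ 2)) := by
    simpa using isTest_radial_mul (n := n) hκ (P := fun _ => 1) contDiff_const
  set C := ∫ x, ‖conj (y x) * κ (‖x‖ ^ 2)‖ with hC
  have hbound : ∀ ε > 0, ‖∫ x, conj (y x) * ψ x‖ ≤ ε * C := by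
    intro ε hε
    obtain ⟨Q, hQ, hQε⟩ := exists_homogSpan_near hκt.hasCompactSupport.isCompact
      hψ.contDiff.continuous hε
    obtain ⟨hQ1, hQ2⟩ := hspan κ hκ Q hQ
    have h1 : ∫ x, conj (y x) * ψ x =
        ∫ x, conj (y x) * κ (‖x‖ ^ 2) * (ψ x - Q x) := by
      rw [← sub_zero (∫ x, conj (y x) * ψ x), ← hQ2,
        ← integral_sub (hint _ hψ) (hint _ (isTest_radial_mul hκ hQ1))]
      refine integral_congr_ae (.of_forall fun x => ?_)
      by_cases hx : x ∈ tsupport ψ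
      · simp only [hκ1 x hx]; ring
      · simp only [image_eq_zero_of_notMem_tsupport hx]; ring
    rw [h1, hC, ← integral_const_mul]
    refine norm_integral_le_of_norm_le ((hint _ hκt).norm.const_mul ε) (.of_forall fun x => ?_)
    rw [norm_mul, mul_comm]
    by_cases hx : x ∈ tsupport fun x : E => κ (‖x‖ ^ 2)
    · gcongr
      exact (hQε x hx).le
    · simp [image_eq_zero_of_notMem_tsupport (f := fun x : E => κ (‖x‖ ^ 2)) hx]
  have hC0 : 0 ≤ C := integral_nonneg fun x => norm_nonneg _
  refine norm_le_zero_iff.1 (le_of_forall_pos_le_add fun ε hε => ?_)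
  refine (hbound (ε / (C + 1)) (by positivity)).trans ?_
  rw [zero_add, div_mul_eq_mul_div, div_le_iff₀ (by positivity)]
  nlinarith

end Homogeneous

section Polar

variable {n : ℕ}

local notation "E" => EuclideanSpace ℝ (Fin n)

/-- The surface measure on the unit sphere of `ℝⁿ`. -/
abbrev sphereMeasure (n : ℕ) : Measure (Metric.sphere (0 : EuclideanSpace ℝ (Fin n)) 1) :=
  (volume : Measure (EuclideanSpace ℝ (Fin n))).toSphere

/-- The radial part `r ^ (n - 1) dr` of the Lebesgue measure of `ℝⁿ` in polar coordinates. -/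
def radialMeasure (n : ℕ) : Measure ℝ :=
  lebIoi.withDensity fun r => ENNReal.ofReal (r ^ (n - 1))

lemma radialMeasure_eq_map (n : ℕ) :
    radialMeasure n = (Measure.volumeIoiPow (n - 1)).map Subtype.val := by
  have he := MeasurableEmbedding.subtype_coe (measurableSet_Ioi (a := (0 : ℝ)))
  have hm : Measurable fun r : ℝ => ENNReal.ofReal (r ^ (n - 1)) := by fun_prop
  ext s hs
  rw [Measure.map_apply measurable_subtype_coe hs, Measure.volumeIoiPow,
    withDensity_apply _ (measurable_subtype_coe hs), radialMeasure, withDensity_apply _ hs,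
    lebIoi, ← map_comap_subtype_coe measurableSet_Ioi, he.restrict_map, he.lintegral_map]

instance (n : ℕ) : SFinite (radialMeasure n) := by
  unfold radialMeasure lebIoi
  infer_instance

lemma measurePreserving_polar (hn : 0 < n) :
    MeasurePreserving (fun p : Metric.sphere (0 : E) 1 × ℝ => p.2 • (p.1 : E))
      ((sphereMeasure n).prod (radialMeasure n)) volume := by
  have : Nontrivial E := by
    have : Nonempty (Fin n) := ⟨⟨0, hn⟩⟩
    infer_instance
  have h1 := (volume : Measure E).measurePreserving_homeomorphUnitSphereProd
  rw [finrank_euclideanSpace_fin] at h1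
  have hmeas : Measurable fun p : Metric.sphere (0 : E) 1 × ℝ => p.2 • (p.1 : E) := by fun_prop
  refine ⟨hmeas, ?_⟩
  have h2 : (sphereMeasure n).prod (radialMeasure n) =
      ((sphereMeasure n).prod (Measure.volumeIoiPow (n - 1))).map (Prod.map id Subtype.val) := by
    rw [radialMeasure_eq_map, ← Measure.map_prod_map _ _ measurable_id measurable_subtype_coe,
      Measure.map_id]
  rw [h2, ← h1.map_eq, Measure.map_map hmeas (by fun_prop),
    Measure.map_map (by fun_prop) (by fun_prop)]
  have h3 : ((fun p : Metric.sphere (0 : E) 1 × ℝ => p.2 • (p.1 : E)) ∘ Prod.map id Subtype.val) ∘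
      homeomorphUnitSphereProd E = Subtype.val := by
    ext1 x
    exact congrArg Subtype.val ((homeomorphUnitSphereProd E).symm_apply_apply x)
  rw [h3, map_comap_subtype_coe (measurableSet_singleton (0 : E)).compl, restrict_compl_singleton]

lemma norm_polar (w : Metric.sphere (0 : E) 1) {r : ℝ} (hr : 0 < r) : ‖r • (w : E)‖ = r := by
  simp [norm_smul, abs_of_pos hr]

lemma radialMeasure_absolutelyContinuous (n : ℕ) : radialMeasure n ≪ lebIoi :=
  withDensity_absolutelyContinuous _ _

lemma ae_lebIoi_pos : ∀ᵐ r ∂lebIoi, (0 : ℝ) < r :=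
  ae_restrict_mem measurableSet_Ioi

lemma ae_polar_pos (n : ℕ) :
    ∀ᵐ p ∂(sphereMeasure n).prod (radialMeasure n), 0 < p.2 :=
  Measure.quasiMeasurePreserving_snd.ae
    ((radialMeasure_absolutelyContinuous n).ae_le ae_lebIoi_pos)

lemma quasiMeasurePreserving_norm (hn : 0 < n) :
    Measure.QuasiMeasurePreserving (fun x : E => ‖x‖) volume lebIoi := by
  refine ⟨measurable_norm, ?_⟩
  rw [← (measurePreserving_polar hn).map_eq,
    Measure.map_map measurable_norm (measurePreserving_polar hn).measurable]
  have h : (fun p : Metric.sphere (0 : E) 1 × ℝ => ‖p.2 • (p.1 : E)‖)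
      =ᵐ[(sphereMeasure n).prod (radialMeasure n)] Prod.snd := by
    filter_upwards [ae_polar_pos n] with p hp using norm_polar _ hp
  change Measure.map (fun p : Metric.sphere (0 : E) 1 × ℝ => ‖p.2 • (p.1 : E)‖) _ ≪ _
  rw [Measure.map_congr h]
  exact Measure.quasiMeasurePreserving_snd.absolutelyContinuous.trans
    (radialMeasure_absolutelyContinuous n)

lemma integrable_radialMeasure_iff {f : ℝ → ℂ} :
    Integrable f (radialMeasure n) ↔ Integrable (fun r => ((r ^ (n - 1) : ℝ) : ℂ) * f r) lebIoi := by
  rw [radialMeasure, integrable_withDensity_iff_integrable_smul' (by fun_prop) (by simp)]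
  refine integrable_congr ?_
  filter_upwards [ae_lebIoi_pos] with r hr
  rw [ENNReal.toReal_ofReal (by positivity), Complex.real_smul]

lemma integral_radialMeasure (f : ℝ → ℂ) :
    ∫ r, f r ∂radialMeasure n = ∫ r, ((r ^ (n - 1) : ℝ) : ℂ) * f r ∂lebIoi := by
  rw [radialMeasure, integral_withDensity_eq_integral_toReal_smul (by fun_prop) (by simp)]
  refine integral_congr_ae ?_
  filter_upwards [ae_lebIoi_pos] with r hr
  rw [ENNReal.toReal_ofReal (by positivity), Complex.real_smul]

lemma integrable_polar (hn : 0 < n) {F : E → ℂ} (hF : AEStronglyMeasurable F volume) :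
    Integrable F ↔ Integrable (fun p : Metric.sphere (0 : E) 1 × ℝ => F (p.2 • (p.1 : E)))
      ((sphereMeasure n).prod (radialMeasure n)) :=
  ((measurePreserving_polar hn).integrable_comp hF).symm

lemma integral_polar (hn : 0 < n) {F : E → ℂ} (hF : AEStronglyMeasurable F volume) :
    ∫ x, F x = ∫ p : Metric.sphere (0 : E) 1 × ℝ, F (p.2 • (p.1 : E))
      ∂(sphereMeasure n).prod (radialMeasure n) := by
  rw [← (measurePreserving_polar hn).map_eq] at hF ⊢
  exact integral_map (measurePreserving_polar hn).aemeasurable hF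

end Polar

section ParametricIntegral

variable {X : Type*} [NormedAddCommGroup X] [NormedSpace ℝ X] {K : Set X} [CompactSpace K]
  [MeasurableSpace K] [OpensMeasurableSpace K] (μ : Measure K) [IsFiniteMeasure μ]

lemma hasDerivAt_integral_of_contDiff {G : ℝ × X → ℂ} (hG : ContDiff ℝ ∞ G) (r : ℝ) :
    HasDerivAt (fun r => ∫ w : K, G (r, w) ∂μ)
      (∫ w : K, fderiv ℝ G (r, w) ((1 : ℝ), (0 : X)) ∂μ) r := by
  have hG' : Continuous fun q => fderiv ℝ G q ((1 : ℝ), (0 : X)) :=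
    (hG.continuous_fderiv (by simp)).clm_apply continuous_const
  have hc : IsCompact ((Metric.closedBall r 1 ×ˢ Set.univ : Set (ℝ × K))) :=
    (isCompact_closedBall r 1).prod isCompact_univ
  have hcont : Continuous fun q : ℝ × K => fderiv ℝ G (q.1, (q.2 : X)) ((1 : ℝ), (0 : X)) :=
    hG'.comp (by fun_prop)
  obtain ⟨M, hM⟩ := hc.exists_bound_of_continuousOn hcont.continuousOn
  have hint : ∀ {f : K → ℂ}, Continuous f → Integrable f μ := fun hf =>
    hf.integrable_of_hasCompactSupport (HasCompactSupport.of_compactSpace _)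
  refine (hasDerivAt_integral_of_dominated_loc_of_deriv_le (bound := fun _ => M)
    (Metric.closedBall_mem_nhds r one_pos) (.of_forall fun s => ?_) (hint ?_) ?_
    (.of_forall fun w s hs => hM (s, w) ⟨hs, trivial⟩) (integrable_const M)
    (.of_forall fun w s _ => ?_)).2
  · exact (hint (hG.continuous.comp (by fun_prop))).aestronglyMeasurable
  · exact hG.continuous.comp (by fun_prop)
  · exact (hint (hcont.comp (by fun_prop : Continuous fun w : K => (r, w)))).aestronglyMeasurable
  · exact ((hG.differentiable (by simp)) _).hasFDerivAt.comp_hasDerivAt s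
      ((hasDerivAt_id s).prodMk (hasDerivAt_const s (w : X)))

lemma contDiff_integral_of_contDiff {G : ℝ × X → ℂ} (hG : ContDiff ℝ ∞ G) :
    ContDiff ℝ ∞ fun r => ∫ w : K, G (r, w) ∂μ := by
  rw [contDiff_infty]
  intro k
  induction k generalizing G with
  | zero =>
    exact contDiff_zero.2 (continuous_iff_continuousAt.2 fun r =>
      (hasDerivAt_integral_of_contDiff μ hG r).continuousAt)
  | succ k ih =>
    have hd := hasDerivAt_integral_of_contDiff μ hG
    rw [Nat.cast_succ, contDiff_succ_iff_deriv]
    refine ⟨fun r => (hd r).differentiableAt, by simp, ?_⟩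
    rw [funext fun r => (hd r).deriv]
    exact ih ((hG.fderiv_right (m := ∞) (by simp)).clm_apply contDiff_const)

end ParametricIntegral

section Separation

variable {n : ℕ}

local notation "E" => EuclideanSpace ℝ (Fin n)

/-- The function `r ^ (-(n - 1) / 2) f(r) P(ω)` on `ℝⁿ` in polar coordinates, for `P` homogeneous
of degree `d`. -/
def sepFun (n d : ℕ) (P : EuclideanSpace ℝ (Fin n) → ℂ) (f : ℝ → ℂ)
    (x : EuclideanSpace ℝ (Fin n)) : ℂ :=
  ((‖x‖ ^ (-(((n : ℝ) - 1) / 2 + d)) : ℝ) : ℂ) * f ‖x‖ * P x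

/-- `∫ |P|²` over the unit sphere. -/
def sphereNormSq (n : ℕ) (P : EuclideanSpace ℝ (Fin n) → ℂ) : ℂ :=
  ∫ w, conj (P (w : EuclideanSpace ℝ (Fin n))) * P w ∂sphereMeasure n

/-- The component of `ψ` along `P` in polar coordinates, normalized to be dual to `sepFun`. -/
def sepProj (n : ℕ) (P ψ : EuclideanSpace ℝ (Fin n) → ℂ) (r : ℝ) : ℂ :=
  if 0 < r then ((r ^ (((n : ℝ) - 1) / 2) : ℝ) : ℂ) *
    ∫ w, conj (P (w : EuclideanSpace ℝ (Fin n))) * ψ (r • (w : EuclideanSpace ℝ (Fin n)))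
      ∂sphereMeasure n
  else 0

variable {d : ℕ} {P : EuclideanSpace ℝ (Fin n) → ℂ}

lemma sepFun_polar (hP : IsHomog d P) (f : ℝ → ℂ) (w : Metric.sphere (0 : E) 1) {r : ℝ}
    (hr : 0 < r) :
    sepFun n d P f (r • (w : E)) = ((r ^ (-(((n : ℝ) - 1) / 2)) : ℝ) : ℂ) * f r * P w := by
  rw [sepFun, norm_polar w hr, hP.map_smul, neg_add, Real.rpow_add hr, Real.rpow_neg hr.le (d : ℝ),
    Real.rpow_natCast]
  have : (r : ℂ) ≠ 0 := by exact_mod_cast hr.ne'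
  push_cast
  field_simp

lemma sepFun_congr (hn : 0 < n) (d : ℕ) (P : E → ℂ) {f g : ℝ → ℂ} (h : f =ᵐ[lebIoi] g) :
    sepFun n d P f =ᵐ[volume] sepFun n d P g := by
  filter_upwards [(quasiMeasurePreserving_norm hn).ae_eq_comp h] with x hx
  simp only [Function.comp_apply] at hx
  simp only [sepFun, hx]

lemma aestronglyMeasurable_sepFun (hn : 0 < n) (hP : Continuous P) {f : ℝ → ℂ}
    (hf : AEStronglyMeasurable f lebIoi) : AEStronglyMeasurable (sepFun n d P f) volume := by
  refine AEStronglyMeasurable.mul (AEStronglyMeasurable.mul ?_ ?_) hP.aestronglyMeasurable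
  · exact (Complex.measurable_ofReal.comp (measurable_norm.pow_const _)).aestronglyMeasurable
  · exact hf.comp_quasiMeasurePreserving (quasiMeasurePreserving_norm hn)

lemma integrable_sphere {f : E → ℂ} (hf : Continuous f) :
    Integrable (fun w : Metric.sphere (0 : E) 1 => f w) (sphereMeasure n) :=
  (hf.comp continuous_subtype_val).integrable_of_hasCompactSupport
    (HasCompactSupport.of_compactSpace _)

lemma pow_mul_rpow_sq (hn : 0 < n) {r : ℝ} (hr : 0 < r) :
    ((r ^ (n - 1) : ℝ) : ℂ) * (((r ^ (-(((n : ℝ) - 1) / 2)) : ℝ) : ℂ) *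
      ((r ^ (-(((n : ℝ) - 1) / 2)) : ℝ) : ℂ)) = 1 := by
  rw [← Complex.ofReal_mul, ← Complex.ofReal_mul, ← Real.rpow_natCast, ← Real.rpow_add hr,
    ← Real.rpow_add hr, Nat.cast_pred hn]
  ring_nf
  simp

lemma sepFun_mul_polar (hP : IsHomog d P) (f g : ℝ → ℂ) (w : Metric.sphere (0 : E) 1) {r : ℝ}
    (hr : 0 < r) :
    conj (sepFun n d P f (r • (w : E))) * sepFun n d P g (r • (w : E)) =
      (conj (P w) * P w) * ((((r ^ (-(((n : ℝ) - 1) / 2)) : ℝ) : ℂ) *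
      ((r ^ (-(((n : ℝ) - 1) / 2)) : ℝ) : ℂ)) * (conj (f r) * g r)) := by
  rw [sepFun_polar hP f w hr, sepFun_polar hP g w hr]
  simp only [map_mul, Complex.conj_ofReal]
  ring

lemma sepFun_mul_ae (hP : IsHomog d P) (f g : ℝ → ℂ) :
    (fun p : Metric.sphere (0 : E) 1 × ℝ => conj (sepFun n d P f (p.2 • (p.1 : E))) *
      sepFun n d P g (p.2 • (p.1 : E))) =ᵐ[(sphereMeasure n).prod (radialMeasure n)]
    fun p => (conj (P p.1) * P p.1) * ((((p.2 ^ (-(((n : ℝ) - 1) / 2)) : ℝ) : ℂ) *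
      ((p.2 ^ (-(((n : ℝ) - 1) / 2)) : ℝ) : ℂ)) * (conj (f p.2) * g p.2)) := by
  filter_upwards [ae_polar_pos n] with p hp using sepFun_mul_polar hP f g p.1 hp

lemma continuous_conj_mul {P Q : E → ℂ} (hP : Continuous P) (hQ : Continuous Q) :
    Continuous fun x => conj (P x) * Q x :=
  (Complex.continuous_conj.comp hP).mul hQ

lemma aestronglyMeasurable_conj_mul {X : Type*} [MeasurableSpace X] {μ : Measure X} {f g : X → ℂ}
    (hf : AEStronglyMeasurable f μ) (hg : AEStronglyMeasurable g μ) :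
    AEStronglyMeasurable (fun x => conj (f x) * g x) μ :=
  (Complex.continuous_conj.comp_aestronglyMeasurable hf).mul hg

lemma memLp_sepFun (hn : 0 < n) (hP : IsHomog d P) {f : ℝ → ℂ} (hf : MemLp f 2 lebIoi) :
    MemLp (sepFun n d P f) 2 volume := by
  have hPc := hP.contDiff.continuous
  have hm := aestronglyMeasurable_sepFun (d := d) hn hPc hf.1
  have hsq : ∀ z : ℂ, ((‖z‖ ^ 2 : ℝ) : ℂ) = conj z * z := fun z => by
    rw [mul_comm, Complex.mul_conj, Complex.normSq_eq_norm_sq]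
  rw [memLp_two_iff_integrable_sq_norm hm]
  suffices h : Integrable (fun x => conj (sepFun n d P f x) * sepFun n d P f x) by
    simp only [← hsq] at h
    exact h.re.congr (.of_forall fun x => Complex.ofReal_re _)
  rw [integrable_polar hn (aestronglyMeasurable_conj_mul hm hm),
    integrable_congr (sepFun_mul_ae hP f f)]
  refine Integrable.mul_prod (integrable_sphere (continuous_conj_mul hPc hPc)) (g := fun r : ℝ =>
    ((((r ^ (-(((n : ℝ) - 1) / 2)) : ℝ) : ℂ) * ((r ^ (-(((n : ℝ) - 1) / 2)) : ℝ) : ℂ)) *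
      (conj (f r) * f r))) ?_
  rw [integrable_radialMeasure_iff]
  have hi : Integrable (fun r => conj (f r) * f r) lebIoi := by
    simp only [← hsq]
    exact ((memLp_two_iff_integrable_sq_norm hf.1).1 hf).ofReal
  refine hi.congr ?_
  filter_upwards [ae_lebIoi_pos] with r hr
  rw [← mul_assoc, pow_mul_rpow_sq hn hr, one_mul]

lemma integral_sepFun_mul (hn : 0 < n) (hP : IsHomog d P) {f g : ℝ → ℂ}
    (hf : AEStronglyMeasurable f lebIoi) (hg : AEStronglyMeasurable g lebIoi) :
    ∫ x, conj (sepFun n d P f x) * sepFun n d P g x =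
      sphereNormSq n P * ∫ r, conj (f r) * g r ∂lebIoi := by
  have hPc := hP.contDiff.continuous
  rw [integral_polar hn (aestronglyMeasurable_conj_mul (aestronglyMeasurable_sepFun hn hPc hf)
    (aestronglyMeasurable_sepFun hn hPc hg)),
    integral_congr_ae (sepFun_mul_ae hP f g), sphereNormSq]
  refine (integral_prod_mul (fun w : Metric.sphere (0 : E) 1 => conj (P w) * P w) (fun r : ℝ =>
    ((((r ^ (-(((n : ℝ) - 1) / 2)) : ℝ) : ℂ) * ((r ^ (-(((n : ℝ) - 1) / 2)) : ℝ) : ℂ)) *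
      (conj (f r) * g r)))).trans ?_
  congr 1
  rw [integral_radialMeasure]
  refine integral_congr_ae ?_
  filter_upwards [ae_lebIoi_pos] with r hr
  rw [← mul_assoc, pow_mul_rpow_sq hn hr, one_mul]

lemma integral_sepFun_mul_eq_sepProj (hn : 0 < n) (hP : IsHomog d P) {f : ℝ → ℂ}
    (hf : MemLp f 2 lebIoi) {ψ : E → ℂ} (hψ : MemLp ψ 2 volume) :
    ∫ x, conj (sepFun n d P f x) * ψ x = ∫ r, conj (f r) * sepProj n P ψ r ∂lebIoi := by
  have hi : Integrable (fun x => conj (sepFun n d P f x) * ψ x) :=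
    (memLp_sepFun hn hP hf).star.integrable_mul hψ
  have hi2 := (integrable_polar hn hi.1).1 hi
  rw [integral_polar hn hi.1, integral_prod_symm _ hi2, integral_radialMeasure]
  refine integral_congr_ae ?_
  filter_upwards [ae_lebIoi_pos] with r hr
  have h1 : ∀ w : Metric.sphere (0 : E) 1, conj (sepFun n d P f (r • (w : E))) * ψ (r • (w : E)) =
      ((r ^ (-(((n : ℝ) - 1) / 2)) : ℝ) : ℂ) * conj (f r) * (conj (P w) * ψ (r • (w : E))) :=
    fun w => by
      rw [sepFun_polar hP f w hr]
      simp only [map_mul, Complex.conj_ofReal]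
      ring
  have h2 : ((r ^ (n - 1) : ℝ) : ℂ) * ((r ^ (-(((n : ℝ) - 1) / 2)) : ℝ) : ℂ) =
      ((r ^ (((n : ℝ) - 1) / 2) : ℝ) : ℂ) := by
    rw [← Complex.ofReal_mul, ← Real.rpow_natCast, ← Real.rpow_add hr, Nat.cast_pred hn]
    ring_nf
  simp only [h1]
  rw [integral_const_mul, sepProj, if_pos hr, ← h2]
  ring

lemma isTest_sepProj (hP : ContDiff ℝ ∞ P) {ψ : E → ℂ} (hψ : IsTest {0}ᶜ ψ) :
    IsTest (Set.Ioi 0) (sepProj n P ψ) := by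
  have hK : IsCompact ((fun x : E => ‖x‖) '' tsupport ψ) := hψ.hasCompactSupport.image continuous_norm
  have hsub : Function.support (sepProj n P ψ) ⊆ (fun x : E => ‖x‖) '' tsupport ψ := by
    intro r hr
    by_contra hcon
    refine hr ?_
    unfold sepProj
    split_ifs with hr0
    · rw [integral_eq_zero_of_ae, mul_zero]
      refine .of_forall fun w => ?_
      have : ψ (r • (w : E)) = 0 := by
        by_contra h
        exact hcon ⟨_, subset_tsupport _ h, norm_polar w hr0⟩
      simp [this]
    · rfl
  have hts : tsupport (sepProj n P ψ) ⊆ (fun x : E => ‖x‖) '' tsupport ψ :=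
    closure_minimal hsub hK.isClosed
  have hpos : (fun x : E => ‖x‖) '' tsupport ψ ⊆ Set.Ioi 0 := by
    rintro _ ⟨x, hx, rfl⟩
    exact norm_pos_iff.2 (hψ.tsupport_subset hx)
  refine ⟨contDiff_of_tsupport fun r hr => ?_, hK.of_isClosed_subset (isClosed_tsupport _) hts,
    hts.trans hpos⟩
  have hr0 : 0 < r := hpos (hts hr)
  have hG : ContDiff ℝ ∞ fun q : ℝ × E => conj (P q.2) * ψ (q.1 • q.2) :=
    (Complex.conjCLE.contDiff.comp (hP.comp contDiff_snd)).mul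
      (hψ.contDiff.comp (contDiff_fst.smul contDiff_snd))
  have h1 : ContDiffAt ℝ ∞ (fun r : ℝ => ((r ^ (((n : ℝ) - 1) / 2) : ℝ) : ℂ)) r :=
    Complex.ofRealCLM.contDiff.contDiffAt.comp r (Real.contDiffAt_rpow_const_of_ne hr0.ne')
  refine (h1.mul (contDiff_integral_of_contDiff (sphereMeasure n) hG).contDiffAt).congr_of_eventuallyEq
    ?_
  filter_upwards [lt_mem_nhds hr0] with s hs
  simp [sepProj, hs]

end Separation

section HalfLine

lemma IsTest.of_support_subset {X : Type*} [NormedAddCommGroup X] [NormedSpace ℝ X] {Ω K : Set X}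
    {φ : X → ℂ} (hK : IsCompact K) (hKΩ : K ⊆ Ω) (hsupp : Function.support φ ⊆ K)
    (hφ : ∀ x ∈ Ω, ContDiffAt ℝ ∞ φ x) : IsTest Ω φ :=
  have hts : tsupport φ ⊆ K := closure_minimal hsupp hK.isClosed
  ⟨contDiff_of_tsupport fun x hx => hφ x (hKΩ (hts hx)),
    hK.of_isClosed_subset (isClosed_tsupport _) hts, hts.trans hKΩ⟩

lemma contDiffAt_ofReal_rpow {r : ℝ} (hr : r ≠ 0) (a : ℝ) :
    ContDiffAt ℝ ∞ (fun r : ℝ => ((r ^ a : ℝ) : ℂ)) r :=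
  Complex.ofRealCLM.contDiff.contDiffAt.comp r (Real.contDiffAt_rpow_const_of_ne hr)

lemma IsTest.apply_eq_zero {φ : ℝ → ℂ} (hφ : IsTest (Set.Ioi 0) φ) {r : ℝ} (hr : r ≤ 0) :
    φ r = 0 := by
  by_contra h
  exact absurd (hφ.tsupport_subset (subset_tsupport _ h)) (not_lt.2 hr)

lemma IsTest.deriv {Ω : Set ℝ} {φ : ℝ → ℂ} (hφ : IsTest Ω φ) : IsTest Ω (deriv φ) :=
  hφ.fderiv_apply 1

lemma IsTest.bExp {φ : ℝ → ℂ} (hφ : IsTest (Set.Ioi 0) φ) (n ℓ : ℕ) :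
    IsTest (Set.Ioi 0) (bExp n ℓ φ) := by
  have h : ∀ r ∈ Set.Ioi (0 : ℝ), ContDiffAt ℝ ∞ (fun r : ℝ =>
      (((-((((n : ℝ) + 2 * ℓ - 1) * ((n : ℝ) + 2 * ℓ - 3)) / (4 * r ^ 2)) : ℝ)) : ℂ)) r :=
    fun r hr => Complex.ofRealCLM.contDiff.contDiffAt.comp r
      ((contDiffAt_const.div (by fun_prop) (by
        have : r ≠ 0 := ne_of_gt hr
        positivity)).neg)
  convert hφ.deriv.deriv.add (hφ.smul_of_contDiffAt h) using 1
  ext r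
  simp only [_root_.bExp]
  push_cast
  ring

lemma IsTest.tau2nlExp {φ : ℝ → ℂ} (hφ : IsTest (Set.Ioi 0) φ) (n ℓ : ℕ) (c : ℝ) :
    IsTest (Set.Ioi 0) (tau2nlExp n ℓ c φ) := by
  refine ((hφ.bExp n ℓ).bExp n ℓ).add (hφ.smul_of_contDiffAt fun r hr => ?_)
  refine Complex.ofRealCLM.contDiff.contDiffAt.comp r (contDiffAt_const.div (by fun_prop) ?_)
  have : r ≠ 0 := ne_of_gt hr
  positivity

lemma hasDerivAt_rpow_mul_comp_sq {κ : ℝ → ℂ} (hκ : ContDiff ℝ ∞ κ) (b : ℝ) {r : ℝ} (hr : 0 < r) :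
    HasDerivAt (fun r : ℝ => ((r ^ b : ℝ) : ℂ) * κ (r ^ 2))
      (b * (((r ^ (b - 1) : ℝ) : ℂ) * κ (r ^ 2)) +
        2 * (((r ^ (b + 1) : ℝ) : ℂ) * deriv κ (r ^ 2))) r := by
  have h1 := (Real.hasDerivAt_rpow_const (p := b) (.inl hr.ne')).ofReal_comp
  have h2 : HasDerivAt (fun r : ℝ => κ (r ^ 2)) ((2 * r : ℝ) • deriv κ (r ^ 2)) r := by
    have := ((hκ.differentiable (by simp) (r ^ 2)).hasDerivAt).scomp r (hasDerivAt_pow 2 r)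
    simpa [Function.comp_def] using this
  refine (h1.mul h2).congr_deriv ?_
  rw [Real.rpow_add_one hr.ne', Complex.real_smul]
  push_cast
  ring

lemma bExp_rpow_mul_comp_sq (n ℓ : ℕ) {φ κ : ℝ → ℂ} (hκ : ContDiff ℝ ∞ κ)
    (h : ∀ r : ℝ, 0 < r → φ r = ((r ^ (((n : ℝ) - 1) / 2 + ℓ) : ℝ) : ℂ) * κ (r ^ 2))
    {r : ℝ} (hr : 0 < r) :
    bExp n ℓ φ r = ((r ^ (((n : ℝ) - 1) / 2 + ℓ) : ℝ) : ℂ) *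
      radialOp (2 * n + 4 * ℓ) κ (r ^ 2) := by
  set a : ℝ := ((n : ℝ) - 1) / 2 + ℓ with ha
  have hev : ∀ {s : ℝ}, 0 < s → ∀ᶠ t in nhds s, 0 < t := fun hs => lt_mem_nhds hs
  have hd1 : ∀ s : ℝ, 0 < s → deriv φ s = a * (((s ^ (a - 1) : ℝ) : ℂ) * κ (s ^ 2)) +
        2 * (((s ^ (a + 1) : ℝ) : ℂ) * deriv κ (s ^ 2)) := fun s hs => by
    rw [Filter.EventuallyEq.deriv_eq ((hev hs).mono h)]
    exact (hasDerivAt_rpow_mul_comp_sq hκ a hs).deriv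
  have hd2 := ((hasDerivAt_rpow_mul_comp_sq hκ (a - 1) hr).const_mul (a : ℂ)).fun_add
    ((hasDerivAt_rpow_mul_comp_sq hκ.deriv_complex (a + 1) hr).const_mul 2)
  have e1 : r ^ (a - 1 + 1) = r ^ a := by ring_nf
  have e2 : r ^ (a + 1 - 1) = r ^ a := by ring_nf
  have e3 : r ^ (a + 1 + 1) = r ^ a * r ^ 2 := by
    rw [add_assoc, one_add_one_eq_two, Real.rpow_add hr, Real.rpow_two]
  have e4 : r ^ (a - 1 - 1) = r ^ a / r ^ 2 := by
    rw [sub_sub, one_add_one_eq_two, Real.rpow_sub hr, Real.rpow_two]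
  have hr' : (r : ℂ) ≠ 0 := by exact_mod_cast hr.ne'
  rw [bExp, Filter.EventuallyEq.deriv_eq ((hev hr).mono hd1), hd2.deriv, h r hr, e1, e2, e3, e4, radialOp, ha]
  push_cast
  field_simp
  ring

end HalfLine

section Intertwining

variable {n : ℕ}

local notation "E" => EuclideanSpace ℝ (Fin n)

/-- The differential expression `Δ² + c|x|⁻⁴`. -/
def bilaplacianExp (n : ℕ) (c : ℝ) (φ : EuclideanSpace ℝ (Fin n) → ℂ)
    (x : EuclideanSpace ℝ (Fin n)) : ℂ :=
  laplacian (laplacian φ) x + ((c * (‖x‖ ^ 4)⁻¹ : ℝ) : ℂ) * φ x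

lemma laplacian_radial_mul_solidHarmonic {d : ℕ} {P : E → ℂ} (hP : IsSolidHarmonic d P)
    {κ : ℝ → ℂ} (hκ : ContDiff ℝ ∞ κ) :
    laplacian (fun x => κ (‖x‖ ^ 2) * P x) =
      fun x => radialOp (2 * n + 4 * d) κ (‖x‖ ^ 2) * P x := by
  ext x
  rw [laplacian_radial_mul hκ hP.contDiff (d := d) (fun x => by simpa using hP.fderiv_self x),
    hP.laplacian_eq_zero, mul_zero, add_zero]

/-- The profile `κ` with `φ(r) = r ^ a κ(r²)`. -/
def toRadial (a : ℝ) (φ : ℝ → ℂ) (s : ℝ) : ℂ := ((s ^ (-a / 2) : ℝ) : ℂ) * φ (Real.sqrt s)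

lemma IsTest.toRadial {φ : ℝ → ℂ} (hφ : IsTest (Set.Ioi 0) φ) (a : ℝ) :
    IsTest (Set.Ioi 0) (toRadial a φ) := by
  refine .of_support_subset (hφ.hasCompactSupport.image (continuous_pow 2)) ?_ ?_ ?_
  · rintro _ ⟨r, hr, rfl⟩
    have : 0 < r := hφ.tsupport_subset hr
    exact pow_pos this 2
  · intro s hs
    have h : φ (Real.sqrt s) ≠ 0 := right_ne_zero_of_mul hs
    have hs0 : 0 < Real.sqrt s := hφ.tsupport_subset (subset_tsupport _ h)
    exact ⟨_, subset_tsupport _ h, Real.sq_sqrt (Real.sqrt_pos.1 hs0).le⟩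
  · intro s hs
    exact (contDiffAt_ofReal_rpow (ne_of_gt hs) _).mul
      (hφ.contDiff.contDiffAt.comp s (Real.contDiffAt_sqrt (ne_of_gt hs)))

lemma toRadial_sq (a : ℝ) (φ : ℝ → ℂ) {r : ℝ} (hr : 0 ≤ r) :
    toRadial a φ (r ^ 2) = ((r ^ (-a) : ℝ) : ℂ) * φ r := by
  rw [toRadial, Real.sqrt_sq hr, ← Real.rpow_natCast r 2, ← Real.rpow_mul hr]
  congr 4
  push_cast
  ring

lemma rpow_mul_rpow_neg {r : ℝ} (hr : 0 < r) (a : ℝ) :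
    ((r ^ a : ℝ) : ℂ) * ((r ^ (-a) : ℝ) : ℂ) = 1 := by
  rw [← Complex.ofReal_mul, ← Real.rpow_add hr]
  simp

lemma sepFun_eq_toRadial (d : ℕ) (P : E → ℂ) (φ : ℝ → ℂ) :
    sepFun n d P φ = fun x => toRadial (((n : ℝ) - 1) / 2 + d) φ (‖x‖ ^ 2) * P x := by
  ext x
  rw [sepFun, toRadial_sq _ _ (norm_nonneg x)]

lemma isTest_sepFun {φ : ℝ → ℂ} (hφ : IsTest (Set.Ioi 0) φ) (d : ℕ) {P : E → ℂ}
    (hP : ContDiff ℝ ∞ P) : IsTest {0}ᶜ (sepFun n d P φ) := by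
  rw [sepFun_eq_toRadial]
  exact isTest_radial_mul (hφ.toRadial _) hP

lemma exists_isTest_sepFun_eq {κ : ℝ → ℂ} (hκ : IsTest (Set.Ioi 0) κ) (d : ℕ) (P : E → ℂ) :
    ∃ φ, IsTest (Set.Ioi 0) φ ∧ sepFun n d P φ = fun x => κ (‖x‖ ^ 2) * P x := by
  refine ⟨fun r => ((r ^ (((n : ℝ) - 1) / 2 + d) : ℝ) : ℂ) * κ (r * |r|), ?_, ?_⟩
  · refine .of_support_subset (hκ.hasCompactSupport.image Real.continuous_sqrt) ?_ ?_ ?_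
    · rintro _ ⟨s, hs, rfl⟩
      exact Real.sqrt_pos.2 (hκ.tsupport_subset hs)
    · intro r hr
      have h : κ (r * |r|) ≠ 0 := right_ne_zero_of_mul hr
      have h0 : 0 < r * |r| := hκ.tsupport_subset (subset_tsupport _ h)
      have hr0 : 0 < r := pos_of_mul_pos_left h0 (abs_nonneg r)
      refine ⟨_, subset_tsupport _ h, ?_⟩
      simp only [abs_of_pos hr0, Real.sqrt_mul_self hr0.le]
    · intro r hr
      have hr0 : r ≠ 0 := ne_of_gt hr
      exact (contDiffAt_ofReal_rpow hr0 _).mul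
        (hκ.contDiff.contDiffAt.comp r (contDiffAt_id.mul (contDiffAt_abs hr0)))
  · ext x
    rw [sepFun, abs_norm, ← sq]
    rcases (norm_nonneg x).eq_or_lt with h | h
    · simp [← h, hκ.apply_eq_zero]
    · rw [← mul_assoc, mul_comm (Complex.ofReal _), rpow_mul_rpow_neg h, one_mul]

lemma bilaplacianExp_sepFun {d : ℕ} {P : E → ℂ} (hP : IsSolidHarmonic d P) {φ : ℝ → ℂ}
    (hφ : IsTest (Set.Ioi 0) φ) (c : ℝ) {x : E} (hx : x ≠ 0) :
    bilaplacianExp n c (sepFun n d P φ) x = sepFun n d P (tau2nlExp n d c φ) x := by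
  have hr : 0 < ‖x‖ := norm_pos_iff.2 hx
  set a : ℝ := ((n : ℝ) - 1) / 2 + d with ha
  have hκ := (hφ.toRadial a).contDiff
  have h1 : ∀ r : ℝ, 0 < r → φ r = ((r ^ a : ℝ) : ℂ) * toRadial a φ (r ^ 2) := fun r hr => by
    rw [toRadial_sq _ _ hr.le, ← mul_assoc, rpow_mul_rpow_neg hr, one_mul]
  have h2 : ∀ r : ℝ, 0 < r → _ := fun r hr => bExp_rpow_mul_comp_sq n d hκ h1 hr
  have h3 := bExp_rpow_mul_comp_sq n d hκ.radialOp h2 hr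
  rw [bilaplacianExp, sepFun_eq_toRadial, laplacian_radial_mul_solidHarmonic hP hκ,
    laplacian_radial_mul_solidHarmonic hP hκ.radialOp, sepFun, tau2nlExp, h3, h1 _ hr, ← ha]
  have h4 := rpow_mul_rpow_neg hr a
  rw [div_eq_mul_inv]
  linear_combination (-(radialOp (2 * n + 4 * d) (radialOp (2 * n + 4 * d) (toRadial a φ)) (‖x‖ ^ 2)
    * P x) - ((c * (‖x‖ ^ 4)⁻¹ : ℝ) : ℂ) * (toRadial a φ (‖x‖ ^ 2) * P x)) * h4

end Intertwining

lemma Lp_inner_eq_integral {X : Type*} [MeasurableSpace X] {μ : Measure X} (y p : Lp ℂ 2 μ) {φ : X → ℂ} (h : p =ᵐ[μ] φ) :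
    inner ℂ y p = ∫ x, conj (y x) * φ x ∂μ := by
  rw [L2.inner_def]
  refine integral_congr_ae ?_
  filter_upwards [h] with x hx
  rw [hx, RCLike.inner_apply, mul_comm]

section Operators

variable {X : Type*} [NormedAddCommGroup X] [NormedSpace ℝ X] [MeasurableSpace X] {μ : Measure X}

lemma essentiallySelfAdjoint_isTest_iff [BorelSpace X] [FiniteDimensional ℝ X]
    [IsFiniteMeasureOnCompacts μ] {Ω : Set X} (hΩ : IsOpen Ω) (hae : ∀ᵐ x ∂μ, x ∈ Ω)
    {L : (X → ℂ) → X → ℂ} (hL : ∀ φ, IsTest Ω φ → IsTest Ω (L φ))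
    (hsymm : ∀ φ ψ, IsTest Ω φ → IsTest Ω ψ →
      ∫ x, conj (L φ x) * ψ x ∂μ = ∫ x, conj (φ x) * L ψ x ∂μ) :
    EssentiallySelfAdjoint (Submodule.span ℂ {p : Lp ℂ 2 μ × Lp ℂ 2 μ |
      ∃ φ, IsTest Ω φ ∧ p.1 =ᵐ[μ] φ ∧ p.2 =ᵐ[μ] L φ}).toLinearPMap ↔
    ∀ z : ℂ, z * z = -1 → ∀ y : Lp ℂ 2 μ, (∀ φ, IsTest Ω φ →
      ∫ x, conj (y x) * L φ x ∂μ = z * ∫ x, conj (y x) * φ x ∂μ) → y = 0 := by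
  have hmem : ∀ φ (hφ : IsTest Ω φ), (((hφ.memLp μ).toLp φ, ((hL φ hφ).memLp μ).toLp (L φ)) :
      Lp ℂ 2 μ × Lp ℂ 2 μ) ∈ {p : Lp ℂ 2 μ × Lp ℂ 2 μ |
      ∃ φ, IsTest Ω φ ∧ p.1 =ᵐ[μ] φ ∧ p.2 =ᵐ[μ] L φ} := fun φ hφ =>
    ⟨φ, hφ, (hφ.memLp μ).coeFn_toLp, ((hL φ hφ).memLp μ).coeFn_toLp⟩
  rw [essentiallySelfAdjoint_span_iff]
  · refine forall₃_congr fun z _ y => imp_congr_left ⟨fun h φ hφ => ?_, ?_⟩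
    · have := h _ (hmem φ hφ)
      rwa [Lp_inner_eq_integral _ _ (hφ.memLp μ).coeFn_toLp,
        Lp_inner_eq_integral _ _ ((hL φ hφ).memLp μ).coeFn_toLp] at this
    · rintro h p ⟨φ, hφ, h1, h2⟩
      rw [Lp_inner_eq_integral _ _ h1, Lp_inner_eq_integral _ _ h2, h φ hφ]
  · intro y h
    refine Lp_eq_zero_of_forall_isTest hΩ hae y fun φ hφ => ?_
    rw [← Lp_inner_eq_integral _ _ (hφ.memLp μ).coeFn_toLp]
    exact h _ (hmem φ hφ)
  · rintro p ⟨φ, hφ, h1, h2⟩ q ⟨ψ, hψ, h3, h4⟩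
    rw [Lp_inner_eq_integral _ _ h3, Lp_inner_eq_integral _ _ h4]
    refine Eq.trans (integral_congr_ae ?_) ((hsymm φ ψ hφ hψ).trans (integral_congr_ae ?_))
    · filter_upwards [h2] with x hx
      rw [hx]
    · filter_upwards [h1] with x hx
      rw [hx]

lemma Lp_toLp_eq_of_forall_isTest [BorelSpace X] [FiniteDimensional ℝ X]
    [IsFiniteMeasureOnCompacts μ] {Ω : Set X} (hΩ : IsOpen Ω) (hae : ∀ᵐ x ∂μ, x ∈ Ω)
    {f g : X → ℂ} (hf : MemLp f 2 μ) (hg : MemLp g 2 μ)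
    (h : ∀ φ, IsTest Ω φ → ∫ x, conj (φ x) * f x ∂μ = ∫ x, conj (φ x) * g x ∂μ) :
    hf.toLp f = hg.toLp g := by
  rw [← sub_eq_zero]
  refine Lp_eq_zero_of_forall_isTest hΩ hae _ fun φ hφ => ?_
  have hφL := (hφ.memLp μ).coeFn_toLp
  have key : ∀ {f : X → ℂ} (hf : MemLp f 2 μ),
      inner ℂ ((hφ.memLp μ).toLp φ) (hf.toLp f) = ∫ x, conj (φ x) * f x ∂μ := fun hf => by
    rw [Lp_inner_eq_integral _ _ hf.coeFn_toLp]
    refine integral_congr_ae ?_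
    filter_upwards [hφL] with x hx
    rw [hx]
  rw [← Lp_inner_eq_integral _ _ hφL, ← inner_conj_symm, inner_sub_right, key hf, key hg, h φ hφ,
    sub_self, map_zero]

end Operators

instance : IsFiniteMeasureOnCompacts lebIoi := by
  unfold lebIoi
  infer_instance

section Euclidean

variable {n : ℕ}

local notation "E" => EuclideanSpace ℝ (Fin n)

lemma isTest_bilaplacianExp {φ : E → ℂ} (hφ : IsTest {0}ᶜ φ) (c : ℝ) :
    IsTest {0}ᶜ (bilaplacianExp n c φ) := by
  refine hφ.laplacian.laplacian.add (hφ.smul_of_contDiffAt fun x hx => ?_)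
  have hx' : ‖x‖ ≠ 0 := norm_ne_zero_iff.2 hx
  refine Complex.ofRealCLM.contDiff.contDiffAt.comp x (contDiffAt_const.mul (ContDiffAt.inv ?_ ?_))
  · exact (contDiffAt_norm ℝ hx).pow 4
  · positivity

lemma integral_bilaplacianExp_mul {φ ψ : E → ℂ} (hφ : IsTest {0}ᶜ φ) (hψ : IsTest {0}ᶜ ψ) (c : ℝ) :
    ∫ x, conj (bilaplacianExp n c φ x) * ψ x = ∫ x, conj (φ x) * bilaplacianExp n c ψ x := by
  have h1 := (isTest_bilaplacianExp hφ c).star_comp.mul hψ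
  have h2 := hφ.star_comp.mul (isTest_bilaplacianExp hψ c)
  have h3 := hφ.star_comp.laplacian.laplacian.mul hψ
  have h4 := hφ.star_comp.mul hψ.laplacian.laplacian
  have h5 : ∀ x, conj (laplacian (laplacian φ) x) =
      laplacian (laplacian fun x => conj (φ x)) x := fun x => by
    rw [← laplacian_conj]
    congr 1
    ext y
    rw [laplacian_conj]
  rw [← sub_eq_zero, ← integral_sub (h1.integrable _) (h2.integrable _)]
  have h6 := sub_eq_zero.2 ((integral_laplacian_mul hφ.star_comp.laplacian hψ).trans
    (integral_laplacian_mul hφ.star_comp hψ.laplacian))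
  rw [← integral_sub (h3.integrable _) (h4.integrable _)] at h6
  refine Eq.trans (integral_congr_ae (.of_forall fun x => ?_)) h6
  simp only [bilaplacianExp, map_add, map_mul, Complex.conj_ofReal, h5]
  ring

lemma laplacian_pow_clm (L : E →L[ℝ] ℂ) (m : ℕ) (x : E) :
    laplacian (fun y => L y ^ m) x =
      m * ((m - 1 : ℕ) * L x ^ (m - 1 - 1)) * ∑ i, L (EuclideanSpace.single i (1:ℝ)) ^ 2 := by
  have h : ∀ (m : ℕ) (y v : E), fderiv ℝ (fun y => L y ^ m) y v = m * L y ^ (m - 1) * L v :=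
    fun m y v => by
      rw [(L.hasFDerivAt.pow m).fderiv]
      simp
  simp only [laplacian, h, Finset.mul_sum]
  refine Finset.sum_congr rfl fun i _ => ?_
  have h2 : (fun y => (m : ℂ) * L y ^ (m - 1) * L (EuclideanSpace.single i (1:ℝ))) =
      fun y => ((m : ℂ) * L (EuclideanSpace.single i (1:ℝ))) * L y ^ (m - 1) := by
    ext y
    ring
  rw [h2, fderiv_const_mul (L.differentiable.fun_pow (m - 1) x)]
  simp only [smul_apply, h, smul_eq_mul]
  ring

lemma exists_isSolidHarmonic (hn : 2 ≤ n) (m : ℕ) :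
    ∃ P : E → ℂ, IsSolidHarmonic m P ∧ sphereNormSq n P ≠ 0 := by
  set i₀ : Fin n := ⟨0, by omega⟩ with hi₀
  set i₁ : Fin n := ⟨1, by omega⟩ with hi₁
  have hne : i₀ ≠ i₁ := by simp [hi₀, hi₁]
  set L : E →L[ℝ] ℂ := Complex.ofRealCLM.comp (EuclideanSpace.proj (𝕜 := ℝ) i₀) +
    Complex.I • Complex.ofRealCLM.comp (EuclideanSpace.proj (𝕜 := ℝ) i₁) with hL
  have hLx : ∀ x, L x = x i₀ + Complex.I * x i₁ := fun x => by simp [hL]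
  have hP : IsSolidHarmonic m fun x => L x ^ m := by
    refine ⟨⟨L.contDiff.pow m, fun t x => ?_⟩, fun x => ?_⟩
    · rw [map_smul, Complex.real_smul, mul_pow]
    · rw [laplacian_pow_clm, Finset.sum_eq_add i₀ i₁ hne]
      · simp [hLx, hne, hne.symm]
      · rintro i - ⟨h0, h1⟩
        simp [hLx, h0.symm, h1.symm]
      · simp
      · simp
  refine ⟨_, hP, ?_⟩
  have hsq : ∀ z : ℂ, conj z * z = ((‖z‖ ^ 2 : ℝ) : ℂ) := fun z => by
    rw [mul_comm, Complex.mul_conj, Complex.normSq_eq_norm_sq]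
  simp only [sphereNormSq, hsq]
  rw [integral_complex_ofReal, Complex.ofReal_ne_zero]
  refine (Continuous.integral_pos_of_hasCompactSupport_nonneg_nonzero
    (x := ⟨EuclideanSpace.single i₀ 1, by simp⟩) (by fun_prop)
    (HasCompactSupport.of_compactSpace _) (fun w => by positivity) ?_).ne'
  simp [hLx, hne]

variable {d : ℕ} {P : EuclideanSpace ℝ (Fin n) → ℂ}

lemma exists_clm_sepFun (hn : 0 < n) (hP : IsHomog d P) :
    ∃ U : Lp ℂ 2 lebIoi →L[ℂ] Lp ℂ 2 (volume : Measure (EuclideanSpace ℝ (Fin n))),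
      ∀ f, U f =ᵐ[volume] sepFun n d P f := by
  let V : Lp ℂ 2 lebIoi →ₗ[ℂ] Lp ℂ 2 (volume : Measure (EuclideanSpace ℝ (Fin n))) :=
    { toFun := fun f => (memLp_sepFun hn hP (Lp.memLp f)).toLp _
      map_add' := fun f g => by
        rw [← MemLp.toLp_add, MemLp.toLp_eq_toLp_iff]
        refine (sepFun_congr hn d P (Lp.coeFn_add f g)).trans (.of_forall fun x => ?_)
        simp only [sepFun, Pi.add_apply]
        ring
      map_smul' := fun a f => by
        rw [RingHom.id_apply, ← MemLp.toLp_const_smul, MemLp.toLp_eq_toLp_iff]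
        refine (sepFun_congr hn d P (Lp.coeFn_smul a f)).trans (.of_forall fun x => ?_)
        simp only [sepFun, Pi.smul_apply, smul_eq_mul]
        ring }
  have hV : ∀ f, V f =ᵐ[volume] sepFun n d P f := fun f =>
    MemLp.coeFn_toLp (memLp_sepFun hn hP (Lp.memLp f))
  refine ⟨V.mkContinuous (Real.sqrt ‖sphereNormSq n P‖) fun f => ?_, hV⟩
  refine (sq_le_sq₀ (norm_nonneg _) (by positivity)).1 (le_of_eq ?_)
  rw [mul_pow, Real.sq_sqrt (norm_nonneg _)]
  have hin : inner ℂ (V f) (V f) = sphereNormSq n P * inner ℂ f f := by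
    rw [Lp_inner_eq_integral _ _ (hV f), Lp_inner_eq_integral f f (.refl _ _),
      ← integral_sepFun_mul hn hP (Lp.aestronglyMeasurable f) (Lp.aestronglyMeasurable f)]
    refine integral_congr_ae ?_
    filter_upwards [hV f] with x hx
    rw [hx]
  have := congrArg norm hin
  simpa [inner_self_eq_norm_sq_to_K] using this

lemma ae_ne_zero (hn : 0 < n) : ∀ᵐ x : EuclideanSpace ℝ (Fin n), x ∈ ({0}ᶜ : Set _) := by
  have : Nonempty (Fin n) := ⟨⟨0, hn⟩⟩
  exact compl_mem_ae_iff.2 (measure_singleton 0)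

lemma bilaplacianExp_sepFun_ae (hn : 0 < n) (hP : IsSolidHarmonic d P) {φ : ℝ → ℂ}
    (hφ : IsTest (Set.Ioi 0) φ) (c : ℝ) :
    bilaplacianExp n c (sepFun n d P φ) =ᵐ[volume] sepFun n d P (tau2nlExp n d c φ) := by
  filter_upwards [ae_ne_zero hn] with x hx using bilaplacianExp_sepFun hP hφ c hx

lemma integral_bilaplacianExp_sepFun_mul (hn : 0 < n) (hP : IsSolidHarmonic d P) {φ : ℝ → ℂ}
    (hφ : IsTest (Set.Ioi 0) φ) (c : ℝ) {ψ : EuclideanSpace ℝ (Fin n) → ℂ}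
    (hψ : IsTest {0}ᶜ ψ) :
    ∫ x, conj (sepFun n d P (tau2nlExp n d c φ) x) * ψ x =
      ∫ x, conj (sepFun n d P φ x) * bilaplacianExp n c ψ x := by
  rw [← integral_bilaplacianExp_mul (isTest_sepFun hφ d hP.contDiff) hψ]
  refine integral_congr_ae ?_
  filter_upwards [bilaplacianExp_sepFun_ae hn hP hφ c] with x hx
  rw [hx]

lemma integral_tau2nlExp_mul (hn : 2 ≤ n) (ℓ : ℕ) (c : ℝ) {φ ψ : ℝ → ℂ}
    (hφ : IsTest (Set.Ioi 0) φ) (hψ : IsTest (Set.Ioi 0) ψ) :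
    ∫ r, conj (tau2nlExp n ℓ c φ r) * ψ r ∂lebIoi =
      ∫ r, conj (φ r) * tau2nlExp n ℓ c ψ r ∂lebIoi := by
  have hn0 : 0 < n := by omega
  obtain ⟨P, hP, hC⟩ := exists_isSolidHarmonic hn ℓ
  have hm : ∀ {f : ℝ → ℂ}, IsTest (Set.Ioi 0) f → AEStronglyMeasurable f lebIoi :=
    fun hf => hf.contDiff.continuous.aestronglyMeasurable
  refine mul_left_cancel₀ hC ?_
  rw [← integral_sepFun_mul hn0 hP.toIsHomog (hm (hφ.tau2nlExp n ℓ c)) (hm hψ),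
    ← integral_sepFun_mul hn0 hP.toIsHomog (hm hφ) (hm (hψ.tau2nlExp n ℓ c)),
    integral_bilaplacianExp_sepFun_mul hn0 hP hφ c (isTest_sepFun hψ ℓ hP.contDiff)]
  refine integral_congr_ae ?_
  filter_upwards [bilaplacianExp_sepFun_ae hn0 hP hψ c] with x hx
  rw [hx]

lemma essentiallySelfAdjoint_T2op_iff (hn : 0 < n) (c : ℝ) :
    EssentiallySelfAdjoint (T2op n c) ↔
    ∀ z : ℂ, z * z = -1 → ∀ y : Lp ℂ 2 (volume : Measure (EuclideanSpace ℝ (Fin n))),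
      (∀ φ, IsTest {0}ᶜ φ → ∫ x, conj (y x) * bilaplacianExp n c φ x =
        z * ∫ x, conj (y x) * φ x) → y = 0 := by
  rw [← essentiallySelfAdjoint_isTest_iff isOpen_compl_singleton (ae_ne_zero hn)
    (fun φ hφ => isTest_bilaplacianExp hφ c)
    (fun φ ψ hφ hψ => integral_bilaplacianExp_mul hφ hψ c)]
  unfold T2op opOn graphOf
  congr! 4
  ext p
  refine exists_congr fun φ => ?_
  constructor
  · rintro ⟨h1, h2, h3, h4⟩
    exact ⟨⟨h1, h2, Set.subset_compl_singleton_iff.2 h3⟩, h4⟩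
  · rintro ⟨⟨h1, h2, h3⟩, h4⟩
    exact ⟨h1, h2, Set.subset_compl_singleton_iff.1 h3, h4⟩

lemma essentiallySelfAdjoint_tau2nlOp_iff (hn : 2 ≤ n) (ℓ : ℕ) (c : ℝ) :
    EssentiallySelfAdjoint (tau2nlOp n ℓ c) ↔
    ∀ z : ℂ, z * z = -1 → ∀ y : Lp ℂ 2 lebIoi,
      (∀ φ, IsTest (Set.Ioi 0) φ → ∫ r, conj (y r) * tau2nlExp n ℓ c φ r ∂lebIoi =
        z * ∫ r, conj (y r) * φ r ∂lebIoi) → y = 0 := by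
  rw [← essentiallySelfAdjoint_isTest_iff isOpen_Ioi ae_lebIoi_pos
    (fun φ hφ => hφ.tau2nlExp n ℓ c) (fun φ ψ hφ hψ => integral_tau2nlExp_mul hn ℓ c hφ hψ)]
  unfold tau2nlOp opOnHalfLine graphOnHalfLine
  congr! 4
  ext p
  refine exists_congr fun φ => ?_
  constructor
  · rintro ⟨h1, h2, h3, h4⟩
    exact ⟨⟨h1, h2, h3⟩, h4⟩
  · rintro ⟨⟨h1, h2, h3⟩, h4⟩
    exact ⟨h1, h2, h3, h4⟩

end Euclidean

section Reduction

variable {n : ℕ}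

lemma essentiallySelfAdjoint_T2op_of_tau2nlOp (hn : 2 ≤ n) {c : ℝ}
    (h : ∀ ℓ, EssentiallySelfAdjoint (tau2nlOp n ℓ c)) : EssentiallySelfAdjoint (T2op n c) := by
  have hn0 : 0 < n := by omega
  rw [essentiallySelfAdjoint_T2op_iff hn0]
  intro z hz y hy
  refine Lp_eq_zero_of_forall_solidHarmonic hn0 y fun d P hP κ hκ => ?_
  obtain ⟨U, hU⟩ := exists_clm_sepFun hn0 hP.toIsHomog
  have key : ∀ φ, IsTest (Set.Ioi 0) φ → ∫ r, conj (U.adjoint y r) * φ r ∂lebIoi =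
      ∫ x, conj (y x) * sepFun n d P φ x := fun φ hφ => by
    have hφL := (hφ.memLp lebIoi).coeFn_toLp
    rw [← Lp_inner_eq_integral _ _ hφL, ContinuousLinearMap.adjoint_inner_left,
      Lp_inner_eq_integral _ _ ((hU _).trans (sepFun_congr hn0 d P hφL))]
  have hzero : U.adjoint y = 0 := by
    refine (essentiallySelfAdjoint_tau2nlOp_iff hn d c).1 (h d) z hz _ fun φ hφ => ?_
    rw [key _ hφ, key _ (hφ.tau2nlExp n d c), ← hy _ (isTest_sepFun hφ d hP.contDiff)]
    refine integral_congr_ae ?_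
    filter_upwards [bilaplacianExp_sepFun_ae hn0 hP hφ c] with x hx
    rw [hx]
  obtain ⟨φ, hφ, hφκ⟩ := exists_isTest_sepFun_eq hκ d P
  have h0 := key φ hφ
  rw [hφκ, hzero] at h0
  rw [← h0]
  refine integral_eq_zero_of_ae ?_
  filter_upwards [Lp.coeFn_zero ℂ 2 lebIoi] with r hr
  rw [hr]
  simp

lemma EssentiallySelfAdjoint.tau2nlOp_of_T2op (hn : 2 ≤ n) {c : ℝ}
    (h : EssentiallySelfAdjoint (T2op n c)) (ℓ : ℕ) :
    EssentiallySelfAdjoint (tau2nlOp n ℓ c) := by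
  have hn0 : 0 < n := by omega
  obtain ⟨P, hP, hC⟩ := exists_isSolidHarmonic hn ℓ
  obtain ⟨U, hU⟩ := exists_clm_sepFun hn0 hP.toIsHomog
  rw [essentiallySelfAdjoint_tau2nlOp_iff hn]
  intro z hz y hy
  have key : ∀ {ψ : EuclideanSpace ℝ (Fin n) → ℂ}, IsTest {0}ᶜ ψ →
      ∫ x, conj (U y x) * ψ x = ∫ r, conj (y r) * sepProj n P ψ r ∂lebIoi := fun {ψ} hψ => by
    rw [← integral_sepFun_mul_eq_sepProj hn0 hP.toIsHomog (Lp.memLp y) (hψ.memLp _)]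
    refine integral_congr_ae ?_
    filter_upwards [hU y] with x hx
    rw [hx]
  have hUy : U y = 0 := by
    refine (essentiallySelfAdjoint_T2op_iff hn0 c).1 h z hz _ fun ψ hψ => ?_
    have hTψ := isTest_bilaplacianExp hψ c
    have h1 := (isTest_sepProj hP.contDiff hTψ).memLp lebIoi
    have h2 := ((isTest_sepProj hP.contDiff hψ).tau2nlExp n ℓ c).memLp lebIoi
    have heq := Lp_toLp_eq_of_forall_isTest isOpen_Ioi ae_lebIoi_pos h1 h2 fun φ hφ => by
      rw [← integral_sepFun_mul_eq_sepProj hn0 hP.toIsHomog (hφ.memLp _) (hTψ.memLp _),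
        ← integral_bilaplacianExp_sepFun_mul hn0 hP hφ c hψ,
        integral_sepFun_mul_eq_sepProj hn0 hP.toIsHomog ((hφ.tau2nlExp n ℓ c).memLp _)
          (hψ.memLp _),
        integral_tau2nlExp_mul hn ℓ c hφ (isTest_sepProj hP.contDiff hψ)]
    rw [key hψ, key hTψ, ← hy _ (isTest_sepProj hP.contDiff hψ),
      ← Lp_inner_eq_integral _ _ h1.coeFn_toLp, heq, Lp_inner_eq_integral _ _ h2.coeFn_toLp]
  have hy0 : inner ℂ y y = 0 := by
    refine (mul_eq_zero.1 ?_).resolve_left hC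
    rw [Lp_inner_eq_integral y y (.refl _ _), ← integral_sepFun_mul hn0 hP.toIsHomog
      (Lp.aestronglyMeasurable y) (Lp.aestronglyMeasurable y)]
    refine integral_eq_zero_of_ae ?_
    filter_upwards [hU y, Lp.coeFn_zero ℂ 2 volume] with x hx h0
    rw [← hx, hUy, h0]
    simp
  exact inner_self_eq_zero.1 hy0

end Reduction

theorem stmt8 (n : ℕ) (hn : 2 ≤ n) (c : ℝ) :
    EssentiallySelfAdjoint (T2op n c) ↔
      ∀ ℓ : ℕ, EssentiallySelfAdjoint (tau2nlOp n ℓ c) :=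
  ⟨fun h ℓ => h.tau2nlOp_of_T2op hn ℓ, essentiallySelfAdjoint_T2op_of_tau2nlOp hn⟩
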